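/- For every n ≥ 8, every finite chiral n-polytope has at least 48(n−2)·(n−2)! flags. -/

import Mathlib

open scoped Classical

/-- An abstract polytope of rank `n`: a partially ordered set with a unique minimal
element (of rank `-1`) and a unique maximal element (of rank `n`), all of whose
maximal chains (flags) have exactly `n + 2` elements, equipped with the induced
rank function, satisfying the diamond condition and strong connectivity. -/
structure AbstractPolytope (n : ℕ) where
  Face : Type
  [instPartialOrder : PartialOrder Face]
  rank : Face → ℤ
  bot : Face
  top : Face
  bot_le : ∀ F : Face, bot ≤ F
  le_top : ∀ F : Face, F ≤ top
  rank_bot : rank bot = -1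
  rank_top : rank top = n
  rank_strictMono : ∀ F G : Face, F < G → rank F < rank G
  flag_card : ∀ Φ : Flag Face, Nat.card Φ = n + 2
  flag_ranks : ∀ (Φ : Flag Face) (j : ℤ), -1 ≤ j → j ≤ (n : ℤ) →
    ∃ F ∈ Φ, rank F = j
  diamond : ∀ F G : Face, F < G → rank G = rank F + 2 →
    Nat.card {H : Face // F < H ∧ H < G} = 2
  strongly_connected : ∀ F G : Face, F < G → rank F + 3 ≤ rank G →
    ∀ H H' : Face, F < H → H < G → F < H' → H' < G →
    Relation.ReflTransGen
      (fun A B : Face => F < A ∧ A < G ∧ F < B ∧ B < G ∧ (A ≤ B ∨ B ≤ A)) H H'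

attribute [instance] AbstractPolytope.instPartialOrder

namespace AbstractPolytope

variable {n : ℕ} (P : AbstractPolytope n)

/-- The number of flags of `P`. -/
noncomputable def numFlags : ℕ := Nat.card (Flag P.Face)

/-- A vertex is a face of rank `0`. -/
def IsVertex (F : P.Face) : Prop := P.rank F = 0

/-- A facet is a face of rank `n - 1`. -/
def IsFacet (F : P.Face) : Prop := P.rank F = (n : ℤ) - 1

/-- The number of vertices of `P`. -/
noncomputable def numVertices : ℕ := Nat.card {F : P.Face // P.IsVertex F}

/-- The number of facets of `P`. -/
noncomputable def numFacets : ℕ := Nat.card {F : P.Face // P.IsFacet F}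

/-- Two faces are incident when they are comparable. -/
def Incident (F G : P.Face) : Prop := F ≤ G ∨ G ≤ F

/-- `P` is `(k, m)`-flat when every face of rank `k` is incident with every face of
rank `m`. -/
def IsKMFlat (k m : ℤ) : Prop :=
  ∀ F G : P.Face, P.rank F = k → P.rank G = m → P.Incident F G

/-- `P` is flat when every vertex is incident with every facet. -/
def IsFlat : Prop := P.IsKMFlat 0 ((n : ℤ) - 1)

/-- Two flags are adjacent when they differ in exactly one element. -/
def AdjacentFlags (Φ Ψ : Flag P.Face) : Prop :=
  Φ ≠ Ψ ∧ ((Φ : Set P.Face) \ (Ψ : Set P.Face)).ncard = 1 ∧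
    ((Ψ : Set P.Face) \ (Φ : Set P.Face)).ncard = 1

/-- Two flags lie in the same orbit of the automorphism group `Γ(P)` (the group of
order automorphisms of `P`). -/
def SameOrbit (Φ Ψ : Flag P.Face) : Prop :=
  ∃ f : P.Face ≃o P.Face, f '' (Φ : Set P.Face) = (Ψ : Set P.Face)

/-- `P` is regular when `Γ(P)` is transitive on flags. -/
def IsRegular : Prop := ∀ Φ Ψ : Flag P.Face, P.SameOrbit Φ Ψ

/-- `P` is chiral when its flags fall into exactly two orbits under `Γ(P)` and
adjacent flags always lie in different orbits. -/
def IsChiral : Prop :=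
  (∃ Φ₁ Φ₂ : Flag P.Face, ¬ P.SameOrbit Φ₁ Φ₂ ∧
      ∀ Φ : Flag P.Face, P.SameOrbit Φ Φ₁ ∨ P.SameOrbit Φ Φ₂) ∧
  ∀ Φ Ψ : Flag P.Face, P.AdjacentFlags Φ Ψ → ¬ P.SameOrbit Φ Ψ

/-- The polytope `Q` is (isomorphic to) the section `G/F` of `P`: there is an order
isomorphism from `Q` onto the interval `[F, G]` of `P`, shifting ranks by
`rank F + 1`. -/
def IsSection {m : ℕ} (Q : AbstractPolytope m) (F G : P.Face) : Prop :=
  F ≤ G ∧ ∃ e : Q.Face ≃o (Set.Icc F G),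
    ∀ x : Q.Face, P.rank (e x : P.Face) = Q.rank x + P.rank F + 1

/-- `P` is equivelar of Schläfli type `{p 1, …, p (n-1)}`: every section between a
face of rank `i - 2` and a face of rank `i + 1` is a polygon with exactly `p i`
vertices (i.e. it contains exactly `p i` faces of rank `i - 1`). -/
def IsSchlafli (p : ℕ → ℕ) : Prop :=
  ∀ i : ℕ, 1 ≤ i → i ≤ n - 1 →
    ∀ F G : P.Face, F < G → P.rank F = (i : ℤ) - 2 → P.rank G = (i : ℤ) + 1 →
      Nat.card {H : P.Face // F < H ∧ H < G ∧ P.rank H = (i : ℤ) - 1} = p i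

/-- `P` is tight of type `{p 1, …, p (n-1)}`: it is equivelar of that type and has
exactly `2 p₁ ⋯ p_{n-1}` flags. -/
def IsTight (p : ℕ → ℕ) : Prop :=
  P.IsSchlafli p ∧ P.numFlags = 2 * ∏ i ∈ Finset.Icc 1 (n - 1), p i

end AbstractPolytope


namespace ChiralAux
open Equiv

variable {X : Type}

/-- subgroup generated by the involutions with index in `[i, j)` -/
def GG (r : ℕ → Perm X) (i j : ℕ) : Subgroup (Perm X) :=
  Subgroup.closure {g | ∃ k, i ≤ k ∧ k < j ∧ g = r k}

/-- Abstract chiral flag system. -/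
structure FlagSys (n : ℕ) (X : Type) where
  r : ℕ → Perm X
  base : X
  inv : ∀ i < n, r i * r i = 1
  comm : ∀ i j, i < n → j < n → i + 2 ≤ j → r i * r j = r j * r i
  col : X → Bool
  col_r : ∀ i < n, ∀ x, col (r i x) = !(col x)
  aut : ∀ x y, col x = col y → ∃ f : Perm X, (∀ i < n, f * r i = r i * f) ∧ f x = y
  chir : ∀ f : Perm X, (∀ i < n, f * r i = r i * f) → ∀ x, col (f x) = col x
  inter : ∀ i j i' j', j ≤ n → j' ≤ n → ∀ x, ∀ g ∈ GG r i j, ∀ g' ∈ GG r i' j',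
    g x = g' x → ∃ h ∈ GG r (max i i') (min j j'), h x = g x
  trans : ∀ x y, ∃ g ∈ GG r 0 n, g x = y

theorem r_mem (r : ℕ → Perm X) {i j k : ℕ} (h1 : i ≤ k) (h2 : k < j) : r k ∈ GG r i j :=
  Subgroup.subset_closure ⟨k, h1, h2, rfl⟩

theorem GG_mono (r : ℕ → Perm X) {i j i' j' : ℕ} (h1 : i' ≤ i) (h2 : j ≤ j') :
    GG r i j ≤ GG r i' j' := by
  apply Subgroup.closure_mono
  rintro g ⟨k, a, b, rfl⟩
  exact ⟨k, by omega, by omega, rfl⟩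

theorem GG_empty (r : ℕ → Perm X) {i j : ℕ} (h : j ≤ i) : GG r i j = ⊥ := by
  rw [GG, Subgroup.closure_eq_bot_iff]
  rintro g ⟨k, a, b, rfl⟩
  omega

theorem ncard_fiber [Finite X] {Y : Type*} (S : Set X) (φ : X → Y) (h : ℕ)
    (hS : ∀ x ∈ S, {y | y ∈ S ∧ φ y = φ x}.ncard = h) : S.ncard = h * (φ '' S).ncard := by
  have : Fintype X := Fintype.ofFinite X
  rw [Set.ncard_eq_toFinset_card', Set.ncard_eq_toFinset_card']
  rw [Finset.card_eq_sum_card_image φ S.toFinset]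
  rw [Finset.sum_const_nat (m := h)]
  · rw [mul_comm]
    congr 2
    ext; simp
  · intro y hy
    simp only [Finset.mem_image, Set.mem_toFinset] at hy
    obtain ⟨x, hx, rfl⟩ := hy
    rw [← hS x hx, Set.ncard_eq_toFinset_card']
    congr 1
    ext; simp

namespace FlagSys
variable {n : ℕ} (S : FlagSys n X)

/-- abbreviation for the generated subgroup -/
def G (i j : ℕ) : Subgroup (Perm X) := GG S.r i j

/-- orbit -/
def orb (i j : ℕ) (x : X) : Set X := {y | ∃ g ∈ S.G i j, g x = y}

/-- size of a section -/
noncomputable def N (i j : ℕ) : ℕ := (S.orb i j S.base).ncard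

/-- number of vertices of a section -/
noncomputable def V (i j : ℕ) : ℕ := S.N i j / S.N (i+1) j

/-- number of facets of a section -/
noncomputable def F (i j : ℕ) : ℕ := S.N i j / S.N i (j-1)

theorem mem_orb_self (i j : ℕ) (x : X) : x ∈ S.orb i j x := ⟨1, Subgroup.one_mem _, rfl⟩

theorem orb_symm {i j : ℕ} {x y : X} (h : y ∈ S.orb i j x) : x ∈ S.orb i j y := by
  obtain ⟨g, hg, rfl⟩ := h
  exact ⟨g⁻¹, Subgroup.inv_mem _ hg, by simp⟩

theorem orb_trans {i j : ℕ} {x y z : X} (h : y ∈ S.orb i j x) (h' : z ∈ S.orb i j y) :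
    z ∈ S.orb i j x := by
  obtain ⟨g, hg, rfl⟩ := h
  obtain ⟨g', hg', rfl⟩ := h'
  exact ⟨g' * g, Subgroup.mul_mem _ hg' hg, by simp⟩

theorem orb_mono {i j i' j' : ℕ} (h1 : i' ≤ i) (h2 : j ≤ j') (x : X) :
    S.orb i j x ⊆ S.orb i' j' x := by
  rintro y ⟨g, hg, rfl⟩
  exact ⟨g, GG_mono _ h1 h2 hg, rfl⟩

theorem r_mem_orb {i j k : ℕ} (h1 : i ≤ k) (h2 : k < j) (x : X) : S.r k x ∈ S.orb i j x :=
  ⟨S.r k, r_mem _ h1 h2, rfl⟩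

theorem orb_eq_iff {i j : ℕ} {x y : X} : S.orb i j x = S.orb i j y ↔ y ∈ S.orb i j x := by
  constructor
  · intro h; rw [h]; exact S.mem_orb_self ..
  · intro h
    ext z
    exact ⟨fun hz => S.orb_trans (S.orb_symm h) hz, fun hz => S.orb_trans h hz⟩

theorem orb_empty {i j : ℕ} (h : j ≤ i) (x : X) : S.orb i j x = {x} := by
  ext y
  constructor
  · rintro ⟨g, hg, rfl⟩
    rw [G, GG_empty _ h, Subgroup.mem_bot] at hg
    simp [hg]
  · rintro rfl
    exact S.mem_orb_self ..

theorem orb_inter {i j i' j' : ℕ} (hj : j ≤ n) (hj' : j' ≤ n) {x y : X} (h : y ∈ S.orb i j x)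
    (h' : y ∈ S.orb i' j' x) : y ∈ S.orb (max i i') (min j j') x := by
  obtain ⟨g, hg, rfl⟩ := h
  obtain ⟨g', hg', h⟩ := h'
  exact S.inter i j i' j' hj hj' x g hg g' hg' h.symm

theorem orb_inter' {i j i' j' a b : ℕ} (hj : j ≤ n) (hj' : j' ≤ n) {x y : X}
    (h : y ∈ S.orb i j x)
    (h' : y ∈ S.orb i' j' x) (ha : a = max i i') (hb : b = min j j') : y ∈ S.orb a b x := by
  subst ha hb
  exact S.orb_inter hj hj' h h'

theorem r_ne {i : ℕ} (hi : i < n) (x : X) : S.r i x ≠ x := by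
  intro h
  have := S.col_r i hi x
  rw [h] at this
  simp at this

theorem rr {i : ℕ} (hi : i < n) (x : X) : S.r i (S.r i x) = x := by
  have := S.inv i hi
  have := congrArg (fun f => f x) this
  simpa using this

theorem G_induct {i j : ℕ} (hj : j ≤ n) {p : Perm X → Prop} (h1 : p 1)
    (hr : ∀ k, i ≤ k → k < j → ∀ g ∈ S.G i j, p g → p (S.r k * g)) : ∀ g ∈ S.G i j, p g := by
  intro g hg
  induction hg using Subgroup.closure_induction_left with
  | one => exact h1
  | mul_left x hx y hy ih =>
    obtain ⟨k, a, b, rfl⟩ := hx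
    exact hr k a b y hy ih
  | inv_mul_cancel x hx y hy ih =>
    obtain ⟨k, a, b, rfl⟩ := hx
    have : (S.r k)⁻¹ = S.r k := by
      rw [inv_eq_iff_mul_eq_one]; exact S.inv k (by omega)
    rw [this]
    exact hr k a b y hy ih

theorem G_induct_right {i j : ℕ} (hj : j ≤ n) {p : Perm X → Prop} (h1 : p 1)
    (hr : ∀ k, i ≤ k → k < j → ∀ g ∈ S.G i j, p g → p (g * S.r k)) : ∀ g ∈ S.G i j, p g := by
  intro g hg
  induction hg using Subgroup.closure_induction_right with
  | one => exact h1
  | mul_right x hx y hy ih =>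
    obtain ⟨k, a, b, rfl⟩ := hy
    exact hr k a b x hx ih
  | mul_inv_cancel x hx y hy ih =>
    obtain ⟨k, a, b, rfl⟩ := hy
    have : (S.r k)⁻¹ = S.r k := by
      rw [inv_eq_iff_mul_eq_one]; exact S.inv k (by omega)
    rw [this]
    exact hr k a b x hx ih

theorem comm_of_gens {i j : ℕ} (f : Perm X) (hf : ∀ k, i ≤ k → k < j → f * S.r k = S.r k * f) :
    ∀ g ∈ S.G i j, f * g = g * f := by
  intro g hg
  have : S.G i j ≤ Subgroup.centralizer {f} := by
    rw [G, GG, Subgroup.closure_le]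
    rintro g ⟨k, a, b, rfl⟩
    rw [SetLike.mem_coe, Subgroup.mem_centralizer_iff]
    intro h hh
    rw [Set.mem_singleton_iff] at hh
    subst hh
    exact hf k a b
  have := this hg
  rw [Subgroup.mem_centralizer_iff] at this
  exact this f rfl

theorem comm' {i j : ℕ} (hi : i < n) (hj : j < n) (h : i + 2 ≤ j ∨ j + 2 ≤ i) :
    S.r i * S.r j = S.r j * S.r i := by
  rcases h with h | h
  · exact S.comm i j hi hj h
  · exact (S.comm j i hj hi h).symm

theorem comm_G {a b c d : ℕ} (hbc : b < c) (hd : d ≤ n) {g h : Perm X} (hg : g ∈ S.G a b)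
    (hh : h ∈ S.G c d) : g * h = h * g := by
  by_cases hcd : c < d
  · refine S.comm_of_gens g (fun k h1 h2 => ?_) h hh
    refine (S.comm_of_gens (S.r k) (fun l h3 h4 => ?_) g hg).symm
    exact S.comm' (by omega) (by omega) (by omega)
  · rw [G, GG_empty _ (by omega), Subgroup.mem_bot] at hh
    simp [hh]

theorem aut_comm {i j : ℕ} (hj : j ≤ n) {f : Perm X} (hf : ∀ i < n, f * S.r i = S.r i * f)
    {g : Perm X} (hg : g ∈ S.G i j) (x : X) : f (g x) = g (f x) := by
  have := S.comm_of_gens (i := i) (j := j) f (fun k _ h2 => hf k (by omega)) g hg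
  exact congrArg (fun e => e x) this

theorem aut_orb {i j : ℕ} (hj : j ≤ n) {f : Perm X} (hf : ∀ i < n, f * S.r i = S.r i * f)
    (x : X) : f '' S.orb i j x = S.orb i j (f x) := by
  ext y
  constructor
  · rintro ⟨z, ⟨g, hg, rfl⟩, rfl⟩
    exact ⟨g, hg, (S.aut_comm hj hf hg x).symm⟩
  · rintro ⟨g, hg, rfl⟩
    exact ⟨g x, ⟨g, hg, rfl⟩, S.aut_comm hj hf hg x⟩

theorem exists_col {i j k : ℕ} (h1 : i ≤ k) (h2 : k < j) (hj : j ≤ n) (x : X) (c : Bool) :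
    ∃ y ∈ S.orb i j x, S.col y = c := by
  by_cases h : S.col x = c
  · exact ⟨x, S.mem_orb_self .., h⟩
  · refine ⟨S.r k x, S.r_mem_orb h1 h2 x, ?_⟩
    rw [S.col_r k (by omega)]
    cases c <;> simp_all

theorem N_const {i j : ℕ} (hj : j ≤ n) (x : X) : (S.orb i j x).ncard = S.N i j := by
  by_cases hij : i < j
  · obtain ⟨y, hy, hc⟩ := S.exists_col le_rfl hij hj x (S.col S.base)
    obtain ⟨f, hf, rfl⟩ := S.aut _ _ hc.symm
    rw [S.orb_eq_iff.2 hy, ← S.aut_orb hj hf, N, Set.ncard_image_of_injective _ f.injective]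
  · rw [N, S.orb_empty (by omega), S.orb_empty (by omega)]
    simp

theorem N_empty {i j : ℕ} (h : j ≤ i) : S.N i j = 1 := by
  rw [N, S.orb_empty h]; simp

theorem orb_one {i : ℕ} (hi : i < n) (x : X) : S.orb i (i+1) x = {x, S.r i x} := by
  ext y
  constructor
  · rintro ⟨g, hg, rfl⟩
    revert g
    refine S.G_induct (by omega) (by simp) ?_
    intro k h1 h2 g _ ih
    obtain rfl : k = i := by omega
    rcases ih with ih | ih
    · right; simp [ih]
    · left
      rw [Perm.mul_apply, ih, S.rr hi]
  · rintro (rfl | rfl)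
    · exact S.mem_orb_self ..
    · exact S.r_mem_orb (by omega) (by omega) _

theorem N_one {i : ℕ} (hi : i < n) : S.N i (i+1) = 2 := by
  rw [N, S.orb_one hi, Set.ncard_pair]
  exact (S.r_ne hi _).symm

variable [Finite X]

theorem N_pos (i j : ℕ) : 0 < S.N i j := by
  rw [N, Set.ncard_pos]
  exact ⟨_, S.mem_orb_self ..⟩

theorem orb_count {i j a b : ℕ} (hi : i ≤ a) (hb : b ≤ j) (hj : j ≤ n) (x : X) :
    S.N i j = S.N a b * (S.orb a b '' S.orb i j x).ncard := by
  rw [← S.N_const hj x]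
  apply ncard_fiber
  intro y hy
  rw [← S.N_const (by omega : b ≤ n) y]
  congr 1
  ext z
  constructor
  · rintro ⟨h1, h2⟩
    exact S.orb_eq_iff.1 h2.symm
  · intro h
    exact ⟨S.orb_trans hy (S.orb_mono hi hb _ h), (S.orb_eq_iff.2 h).symm⟩

theorem V_card {i j : ℕ} (hj : j ≤ n) (x : X) : (S.orb (i+1) j '' S.orb i j x).ncard = S.V i j := by
  rw [V, S.orb_count (Nat.le_succ i) le_rfl hj x, Nat.mul_div_cancel_left _ (S.N_pos _ _)]

theorem F_card {i j : ℕ} (hj : j ≤ n) (x : X) : (S.orb i (j-1) '' S.orb i j x).ncard = S.F i j := by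
  rw [F, S.orb_count le_rfl (Nat.sub_le j 1) hj x, Nat.mul_div_cancel_left _ (S.N_pos _ _)]

theorem N_eq_V {i j : ℕ} (hj : j ≤ n) : S.N i j = S.V i j * S.N (i+1) j := by
  rw [S.orb_count (Nat.le_succ i) le_rfl hj S.base, S.V_card hj, mul_comm]

theorem N_eq_F {i j : ℕ} (hj : j ≤ n) : S.N i j = S.F i j * S.N i (j-1) := by
  rw [S.orb_count le_rfl (Nat.sub_le j 1) hj S.base, S.F_card hj, mul_comm]

theorem V_one {i : ℕ} (hi : i < n) : S.V i (i+1) = 2 := by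
  have := S.N_eq_V (i := i) (j := i+1) hi
  rw [S.N_one hi, S.N_empty le_rfl] at this
  omega

theorem F_one {i : ℕ} (hi : i < n) : S.F i (i+1) = 2 := by
  have := S.N_eq_F (i := i) (j := i+1) hi
  rw [S.N_one hi, S.N_empty (by omega)] at this
  omega

/-- flat section -/
def Flat (i j : ℕ) : Prop := ∀ x, ∀ y ∈ S.orb i j x, ∃ z ∈ S.orb (i+1) j x, y ∈ S.orb i (j-1) z

theorem V_mono_aux {i j : ℕ} (hj : j + 1 ≤ n) (x : X) :
    ((fun A => ⋃ y ∈ A, S.orb (i+1) (j+1) y) '' (S.orb (i+1) j '' S.orb i j x)).ncard = S.V i j := by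
  rw [← S.V_card (by omega : j ≤ n) x]
  apply Set.InjOn.ncard_image
  rintro _ ⟨y, hy, rfl⟩ _ ⟨z, hz, rfl⟩ h
  simp only at h
  have h1 : z ∈ ⋃ w ∈ S.orb (i+1) j y, S.orb (i+1) (j+1) w := by
    rw [h]
    exact Set.mem_biUnion (S.mem_orb_self ..) (S.mem_orb_self ..)
  simp only [Set.mem_iUnion] at h1
  obtain ⟨w, hw, hzw⟩ := h1
  rw [S.orb_eq_iff]
  have h2 : z ∈ S.orb (i+1) (j+1) y := S.orb_trans (S.orb_mono le_rfl (by omega) _ hw) hzw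
  have h3 : z ∈ S.orb i j y := S.orb_trans (S.orb_symm hy) hz
  exact S.orb_inter' (by omega) (by omega) h2 h3 (by omega) (by omega)

theorem V_image_eq {i j : ℕ} (x : X) :
    ((fun A => ⋃ y ∈ A, S.orb (i+1) (j+1) y) '' (S.orb (i+1) j '' S.orb i j x)) =
      S.orb (i+1) (j+1) '' S.orb i j x := by
  rw [Set.image_image]
  apply Set.image_congr
  intro y _
  ext z
  simp only [Set.mem_iUnion]
  constructor
  · rintro ⟨w, hw, hz⟩
    exact S.orb_trans (S.orb_mono le_rfl (by omega) _ hw) hz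
  · intro hz
    exact ⟨y, S.mem_orb_self .., hz⟩

theorem V_mono {i j : ℕ} (hj : j + 1 ≤ n) : S.V i j ≤ S.V i (j+1) := by
  rw [← S.V_mono_aux hj S.base, S.V_image_eq, ← S.V_card hj S.base]
  exact Set.ncard_le_ncard (Set.image_mono (S.orb_mono le_rfl (by omega) _))

theorem V_lt {i j : ℕ} (hj : j + 1 ≤ n) (hf : ¬ S.Flat i (j+1)) : S.V i j < S.V i (j+1) := by
  simp only [Flat, not_forall, not_exists, not_and] at hf
  obtain ⟨x, y, hy, h⟩ := hf
  rw [← S.V_mono_aux hj y, S.V_image_eq, ← S.V_card hj y]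
  refine Set.ncard_lt_ncard ⟨Set.image_mono (S.orb_mono le_rfl (by omega) _), fun hsub => ?_⟩
    (Set.toFinite _)
  have := hsub ⟨x, S.orb_symm hy, rfl⟩
  obtain ⟨z, hz, hzx⟩ := this
  have h3 := S.orb_eq_iff.1 hzx
  exact h z (S.orb_symm h3) (S.orb_symm hz)

end FlagSys
end ChiralAux

set_option linter.unusedSectionVars false

namespace ChiralAux
open Equiv
variable {X : Type}

theorem GG_dual (r : ℕ → Perm X) (n : ℕ) {i j : ℕ} (hj : j ≤ n) :
    GG (fun k => r (n-1-k)) i j = GG r (n-j) (n-i) := by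
  rw [GG, GG]
  congr 1
  ext g
  constructor
  · rintro ⟨k, h1, h2, rfl⟩
    exact ⟨n-1-k, by omega, by omega, rfl⟩
  · rintro ⟨k, h1, h2, rfl⟩
    refine ⟨n-1-k, by omega, by omega, ?_⟩
    show r k = r (n-1-(n-1-k))
    congr 1
    omega

namespace FlagSys
variable {n : ℕ} (S : FlagSys n X)

/-- the dual system -/
def dual : FlagSys n X where
  r := fun k => S.r (n-1-k)
  base := S.base
  inv := fun i hi => S.inv _ (by omega)
  comm := fun i j hi hj h => (S.comm (n-1-j) (n-1-i) (by omega) (by omega) (by omega)).symm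
  col := S.col
  col_r := fun i hi => S.col_r _ (by omega)
  aut := by
    intro x y h
    obtain ⟨f, hf, h⟩ := S.aut x y h
    exact ⟨f, fun i hi => hf _ (by omega), h⟩
  chir := by
    intro f hf
    apply S.chir f
    intro i hi
    have := hf (n-1-i) (by omega)
    rwa [show n-1-(n-1-i) = i by omega] at this
  inter := by
    intro i j i' j' hj hj' x g hg g' hg' h
    rw [GG_dual _ _ hj] at hg
    rw [GG_dual _ _ hj'] at hg'
    rw [GG_dual _ _ (by omega)]
    have := S.inter _ _ _ _ (by omega) (by omega) x g hg g' hg' h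
    rwa [show n - min j j' = max (n-j) (n-j') by omega,
      show n - max i i' = min (n-i) (n-i') by omega]
  trans := by
    intro x y
    rw [GG_dual _ _ le_rfl]
    simpa using S.trans x y

theorem dual_G {a b i j : ℕ} (h1 : a + j = n) (h2 : b + i = n) : S.dual.G a b = S.G i j := by
  rw [G, G]
  show GG (fun k => S.r (n-1-k)) a b = _
  rw [GG_dual _ _ (by omega)]
  congr 1 <;> omega

theorem dual_orb {a b i j : ℕ} (h1 : a + j = n) (h2 : b + i = n) (x : X) :
    S.dual.orb a b x = S.orb i j x := by
  rw [orb, orb, S.dual_G h1 h2]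

theorem dual_N {a b i j : ℕ} (h1 : a + j = n) (h2 : b + i = n) : S.dual.N a b = S.N i j := by
  rw [N, N, S.dual_orb h1 h2]; rfl

theorem dual_r {a i : ℕ} (h1 : a + i + 1 = n) : S.dual.r a = S.r i := by
  show S.r (n-1-a) = _
  congr 1; omega

theorem dual_V {a b i j : ℕ} (h1 : a + j = n) (h2 : b + i = n) (hj : 1 ≤ j) :
    S.dual.V a b = S.F i j := by
  rw [V, F, S.dual_N h1 h2, S.dual_N (i := i) (j := j-1) (by omega) h2]

theorem dual_F {a b i j : ℕ} (h1 : a + j = n) (h2 : b + i = n) (hj : i < n) :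
    S.dual.F a b = S.V i j := by
  rw [V, F, S.dual_N h1 h2, S.dual_N (i := i+1) (j := j) h1 (by omega)]

theorem flat_symm {i j : ℕ} : S.Flat i j ↔
    ∀ x, ∀ y ∈ S.orb i j x, ∃ z ∈ S.orb i (j-1) x, y ∈ S.orb (i+1) j z := by
  constructor
  · intro h x y hy
    obtain ⟨z, h1, h2⟩ := h y x (S.orb_symm hy)
    exact ⟨z, S.orb_symm h2, S.orb_symm h1⟩
  · intro h x y hy
    obtain ⟨z, h1, h2⟩ := h y x (S.orb_symm hy)
    exact ⟨z, S.orb_symm h2, S.orb_symm h1⟩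

theorem dual_flat {a b i j : ℕ} (h1 : a + j = n) (h2 : b + i = n) (hi : i < n) (hj : 1 ≤ j) :
    S.dual.Flat a b ↔ S.Flat i j := by
  rw [S.flat_symm, Flat]
  simp only [S.dual_orb h1 h2, S.dual_orb (i := i) (j := j-1) (a := a + 1) (b := b) (by omega) h2,
    S.dual_orb (a := a) (b := b-1) (i := i+1) (j := j) h1 (by omega)]

/-- the section acts semiregularly -/
def Reg (i j : ℕ) : Prop := ∀ g ∈ S.G i j, ∀ x, g x = x → g = 1

theorem dual_reg {a b i j : ℕ} (h1 : a + j = n) (h2 : b + i = n) :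
    S.dual.Reg a b ↔ S.Reg i j := by
  rw [Reg, Reg, S.dual_G h1 h2]

theorem fix_of_comm {k : ℕ} (hk : k < n) {g : Perm X} (hg : g ∈ S.G 0 n)
    (hc : S.r k * g = g * S.r k) {x : X} (hx : g x = x) : g = 1 := by
  have key : ∀ y, S.col x = S.col y → g y = y := by
    intro y hy
    obtain ⟨f, hf, rfl⟩ := S.aut x y hy
    rw [← S.aut_comm le_rfl hf hg, hx]
  ext y
  rw [Perm.one_apply]
  by_cases h : S.col x = S.col y
  · exact key y h
  · have h1 := key (S.r k y) (by rw [S.col_r k hk]; cases hx : S.col x <;> cases hy : S.col y <;> simp_all)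
    have h2 := congrArg (fun e => e y) hc
    simp only [Perm.mul_apply] at h2
    rw [h1] at h2
    exact (S.r k).injective h2

theorem reg_low {i j : ℕ} (hj : j + 2 ≤ n) : S.Reg i j := by
  intro g hg x hx
  refine S.fix_of_comm (k := n-1) (by omega) (GG_mono _ (Nat.zero_le _) (by omega) hg) ?_ hx
  exact (S.comm_G (c := n-1) (d := n) (by omega) le_rfl hg (r_mem _ le_rfl (by omega))).symm

theorem reg_high {i j : ℕ} (hi : 2 ≤ i) (hj : j ≤ n) : S.Reg i j := by
  by_cases hn : 0 < n
  · intro g hg x hx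
    refine S.fix_of_comm (k := 0) hn (GG_mono _ (Nat.zero_le _) (by omega) hg) ?_ hx
    exact S.comm_G (a := 0) (b := 1) (by omega) hj (r_mem _ le_rfl (by omega)) hg
  · intro g hg
    rw [G, GG_empty _ (by omega), Subgroup.mem_bot] at hg
    simp [hg]

theorem not_reg (hn : 0 < n) : ¬ S.Reg 0 n := by
  intro h
  choose γ hγ hγ' using S.trans S.base
  have key : ∀ g ∈ S.G 0 n, γ (g S.base) = g := by
    intro g hg
    have h1 : g⁻¹ * γ (g S.base) = 1 := by
      apply h _ (Subgroup.mul_mem _ (Subgroup.inv_mem _ hg) (hγ _)) S.base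
      rw [Perm.mul_apply, hγ']
      simp
    exact (inv_mul_eq_one.1 h1).symm
  let f : X → X := fun x => γ x (S.r 0 S.base)
  have hf : ∀ g ∈ S.G 0 n, f (g S.base) = g (S.r 0 S.base) := by
    intro g hg
    show γ (g S.base) _ = _
    rw [key g hg]
  have hfg : ∀ g ∈ S.G 0 n, ∀ x, f (g x) = g (f x) := by
    intro g hg x
    have hx := hγ' x
    conv_lhs => rw [← hx]
    have := hf (g * γ x) (Subgroup.mul_mem _ hg (hγ x))
    rw [Perm.mul_apply] at this
    rw [this]
    rfl
  have h0 : S.r 0 ∈ S.G 0 n := r_mem _ le_rfl hn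
  have hff : ∀ x, f (f x) = x := by
    intro x
    obtain ⟨g, hg, rfl⟩ := S.trans S.base x
    rw [hf g hg, hfg g hg, hf _ h0, S.rr hn]
  let e : Perm X := ⟨f, f, hff, hff⟩
  have := S.chir e (by
    intro i hi
    ext x
    exact hfg _ (r_mem _ (Nat.zero_le _) hi) x) S.base
  have h2 : e S.base = S.r 0 S.base := hf 1 (Subgroup.one_mem _)
  rw [h2, S.col_r 0 hn] at this
  simp at this

theorem theoremA {i j : ℕ} (hij : i + 3 ≤ j) (hj : j ≤ n) (hK : S.Reg i (j-1))
    (hL : S.Reg (i+1) j) (hF : S.Flat i (j-1)) : S.Reg i j := by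
  have f1 : ∀ g ∈ S.G i (j-1), ∃ y ∈ S.G i (j-2), ∃ x ∈ S.G (i+1) (j-1), g = y * x := by
    intro g hg
    obtain ⟨_, ⟨x, hx, rfl⟩, y, hy, h⟩ := hF S.base (g S.base) ⟨g, hg, rfl⟩
    have hy' : y ∈ S.G i (j-2) := GG_mono _ le_rfl (by omega) hy
    refine ⟨y, hy', x, hx, ?_⟩
    have : (y * x)⁻¹ * g = 1 := by
      apply hK _ (Subgroup.mul_mem _ (Subgroup.inv_mem _ (Subgroup.mul_mem _ ?_ ?_)) hg) S.base
      · rw [Perm.mul_apply, ← h, ← Perm.mul_apply y x, ← Perm.mul_apply]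
        simp
      · exact GG_mono _ le_rfl (by omega) hy
      · exact GG_mono _ (by omega) (by omega) hx
    exact (inv_mul_eq_one.1 this).symm
  have f2 : ∀ g ∈ S.G i j, ∃ y ∈ S.G i (j-2), ∃ x ∈ S.G (i+1) j, g = y * x := by
    refine S.G_induct hj ⟨1, Subgroup.one_mem _, 1, Subgroup.one_mem _, by simp⟩ ?_
    rintro k h1 h2 _ _ ⟨y, hy, x, hx, rfl⟩
    by_cases hk : k < j - 1
    · obtain ⟨y', hy', x', hx', h⟩ := f1 (S.r k * y)
        (Subgroup.mul_mem _ (r_mem _ h1 hk) (GG_mono _ le_rfl (by omega) hy))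
      refine ⟨y', hy', x' * x, Subgroup.mul_mem _ (GG_mono _ le_rfl (by omega) hx') hx, ?_⟩
      rw [← mul_assoc, h, mul_assoc]
    · obtain rfl : k = j - 1 := by omega
      refine ⟨y, hy, S.r (j-1) * x, Subgroup.mul_mem _ (r_mem _ (by omega) h2) hx, ?_⟩
      rw [← mul_assoc, ← mul_assoc]
      congr 1
      exact (S.comm_G (c := j-1) (d := j) (by omega) hj hy (r_mem _ le_rfl (by omega))).symm
  intro g hg Φ hΦ
  obtain ⟨y, hy, x, hx, rfl⟩ := f2 g hg
  have h1 : x Φ = y⁻¹ Φ := by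
    rw [Perm.eq_inv_iff_eq]; exact hΦ
  have h2 : x Φ ∈ S.orb (i+1) j Φ := ⟨x, hx, rfl⟩
  have h3 : x Φ ∈ S.orb i (j-2) Φ := ⟨y⁻¹, Subgroup.inv_mem _ hy, h1.symm⟩
  obtain ⟨z, hz, hzx⟩ := S.orb_inter' hj (by omega) h2 h3 (a := i+1) (b := j-2) (by omega) (by omega)
  have hz1 : z = x := by
    have : z⁻¹ * x = 1 := by
      apply hL _ (Subgroup.mul_mem _ (Subgroup.inv_mem _ (GG_mono _ le_rfl (by omega) hz)) hx) Φ
      rw [Perm.mul_apply, Perm.inv_eq_iff_eq, hzx]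
    exact inv_mul_eq_one.1 this
  have hz2 : y * z = 1 := by
    apply hK _ _ Φ
    · rw [Perm.mul_apply, hzx]; exact hΦ
    · exact Subgroup.mul_mem _ (GG_mono _ le_rfl (by omega) hy) (GG_mono _ (by omega) (by omega) hz)
  rw [← hz1, hz2]

theorem theoremA' {i j : ℕ} (hij : i + 3 ≤ j) (hj : j ≤ n) (hK : S.Reg i (j-1))
    (hL : S.Reg (i+1) j) (hF : S.Flat (i+1) j) : S.Reg i j := by
  rw [← S.dual_reg (a := n-j) (b := n-i) (by omega) (by omega)]
  apply S.dual.theoremA (by omega) (by omega)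
  · rwa [S.dual_reg (i := i+1) (j := j) (by omega) (by omega)]
  · rwa [S.dual_reg (i := i) (j := j-1) (by omega) (by omega)]
  · rwa [S.dual_flat (i := i+1) (j := j) (by omega) (by omega) (by omega) (by omega)]

theorem flat_up {i j : ℕ} (hij : i < j) (hj : j + 1 ≤ n) (h : S.Flat i j) : S.Flat i (j+1) := by
  rintro x _ ⟨g, hg, rfl⟩
  rw [Nat.add_sub_cancel]
  revert g
  refine S.G_induct hj ⟨x, S.mem_orb_self .., S.mem_orb_self ..⟩ ?_
  rintro k h1 h2 g _ ⟨z, hz, hgz⟩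
  by_cases hk : k < j
  · exact ⟨z, hz, S.orb_trans hgz (S.r_mem_orb h1 hk _)⟩
  · obtain rfl : k = j := by omega
    obtain ⟨w, hw, y, hy, hy'⟩ := h z _ hgz
    refine ⟨S.r k w, S.orb_trans hz (S.orb_trans (S.orb_mono le_rfl (by omega) _ hw)
      (S.r_mem_orb (by omega) (by omega) _)), y, GG_mono _ le_rfl (by omega) hy, ?_⟩
    rw [Perm.mul_apply, ← hy', ← Perm.mul_apply, ← Perm.mul_apply]
    congr 1
    exact S.comm_G (c := k) (d := k+1) (by omega) hj hy (r_mem _ le_rfl (by omega))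

theorem flat_down {i j : ℕ} (hij : i + 1 < j) (hj : j ≤ n) (h : S.Flat (i+1) j) : S.Flat i j := by
  rw [← S.dual_flat (a := n-j) (b := n-i-1+1) (by omega) (by omega) (by omega) (by omega)]
  apply S.dual.flat_up (by omega) (by omega)
  rwa [S.dual_flat (i := i+1) (j := j) (by omega) (by omega) (by omega) (by omega)]

theorem flat_mono {i j a b : ℕ} (ha : a ≤ i) (hij : i < j) (hb : j ≤ b) (hbn : b ≤ n)
    (h : S.Flat i j) : S.Flat a b := by
  induction b, hb using Nat.le_induction with
  | base =>
    obtain ⟨d, rfl⟩ := Nat.exists_eq_add_of_le ha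
    induction d with
    | zero => exact h
    | succ d ih => exact ih (by omega) (by omega) (S.flat_down (by omega) hbn h)
  | succ b hb ih => exact S.flat_up (by omega) hbn (ih (by omega))

variable [Finite X]

theorem F_mono {i j : ℕ} (hij : i < j) (hj : j ≤ n) : S.F (i+1) j ≤ S.F i j := by
  rw [← S.dual_V (a := n-j) (b := n-i-1) (by omega) (by omega) (by omega),
    ← S.dual_V (a := n-j) (b := n-i-1+1) (by omega) (by omega) (by omega)]
  exact S.dual.V_mono (by omega)

theorem F_lt {i j : ℕ} (hij : i < j) (hj : j ≤ n) (hf : ¬ S.Flat i j) : S.F (i+1) j < S.F i j := by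
  rw [← S.dual_V (a := n-j) (b := n-i-1) (by omega) (by omega) (by omega),
    ← S.dual_V (a := n-j) (b := n-i-1+1) (by omega) (by omega) (by omega)]
  apply S.dual.V_lt (by omega)
  rwa [S.dual_flat (i := i) (j := j) (by omega) (by omega) (by omega) (by omega)]

/-- all subsections of positive length are non-flat -/
def NF (a b : ℕ) : Prop := ∀ i j, a ≤ i → i < j → j ≤ b → ¬ S.Flat i j

theorem NF_of {a b : ℕ} (hb : b ≤ n) (h : ¬ S.Flat a b) : S.NF a b :=
  fun _ _ h1 h2 h3 hf => h (S.flat_mono h1 h2 h3 hb hf)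

theorem NF_mono {a b a' b' : ℕ} (h : S.NF a b) (ha : a ≤ a') (hb : b' ≤ b) : S.NF a' b' :=
  fun i j h1 h2 h3 => h i j (by omega) h2 (by omega)

theorem V_ge {a b i j : ℕ} (h : S.NF a b) (hb : b ≤ n) (hi : a ≤ i) (hij : i < j) (hj : j ≤ b) :
    j - i + 1 ≤ S.V i j := by
  induction j, hij using Nat.le_induction with
  | base =>
    rw [S.V_one (by omega)]; omega
  | succ j h1 ih =>
    have := ih (by omega)
    have := S.V_lt (i := i) (j := j) (by omega) (h i (j+1) hi (by omega) hj)
    omega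

theorem dual_NF {a b i j : ℕ} (h1 : a + j = n) (h2 : b + i = n) (h : S.NF i j) :
    S.dual.NF a b := by
  intro k l hk hl hb
  rw [S.dual_flat (i := n-l) (j := n-k) (by omega) (by omega) (by omega) (by omega)]
  exact h _ _ (by omega) (by omega) (by omega)

theorem F_ge {a b i j : ℕ} (h : S.NF a b) (hb : b ≤ n) (hi : a ≤ i) (hij : i < j) (hj : j ≤ b) :
    j - i + 1 ≤ S.F i j := by
  have := S.dual.V_ge (S.dual_NF (a := n-b) (b := n-a) (by omega) (by omega) h)
    (i := n-j) (j := n-i) (by omega) (by omega) (by omega) (by omega)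
  rw [S.dual_V (i := i) (j := j) (by omega) (by omega) (by omega)] at this
  omega

theorem N_ge {a b i j : ℕ} (h : S.NF a b) (hb : b ≤ n) (hi : a ≤ i) (hij : i ≤ j) (hj : j ≤ b) :
    (j - i + 1).factorial ≤ S.N i j := by
  obtain ⟨d, rfl⟩ := Nat.exists_eq_add_of_le hij
  induction d generalizing i with
  | zero => simp [S.N_empty]
  | succ d ih =>
    have h1 := ih (i := i+1) (by omega) (by omega) (by omega)
    have h2 := S.V_ge h hb (i := i) (j := i+(d+1)) hi (by omega) hj
    rw [S.N_eq_V (by omega)]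
    have e1 : i + 1 + d - (i+1) + 1 = d + 1 := by omega
    have e2 : i + (d + 1) - i + 1 = d + 1 + 1 := by omega
    rw [e1] at h1
    rw [e2] at h2 ⊢
    rw [Nat.factorial_succ, show i + (d+1) = i + 1 + d by ring] at *
    exact Nat.mul_le_mul h2 h1

end FlagSys
end ChiralAux

set_option linter.unusedSectionVars false

namespace ChiralAux
open Equiv
variable {X : Type}
namespace FlagSys
variable {n : ℕ} (S : FlagSys n X)

theorem r_inv {i : ℕ} (hi : i < n) : (S.r i)⁻¹ = S.r i := by
  rw [inv_eq_iff_mul_eq_one]; exact S.inv i hi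

theorem col_rr {k l : ℕ} (hk : k < n) (hl : l < n) (x : X) :
    S.col ((S.r k * S.r l) x) = S.col x := by
  rw [Perm.mul_apply, S.col_r k hk, S.col_r l hl]; simp

theorem col_rr_zpow {k l : ℕ} (hk : k < n) (hl : l < n) (m : ℤ) (x : X) :
    S.col (((S.r k * S.r l)^m) x) = S.col x := by
  induction m generalizing x with
  | zero => simp
  | succ m ih => rw [zpow_add_one, Perm.mul_apply, ih, S.col_rr hk hl]
  | pred m ih =>
    rw [zpow_sub_one, Perm.mul_apply, ih, mul_inv_rev, S.r_inv hk, S.r_inv hl, S.col_rr hl hk]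

theorem dihedral_conj {k l : ℕ} (hk : k < n) (hl : l < n) (m : ℤ) :
    S.r k * (S.r k * S.r l)^m = (S.r k * S.r l)^(-m) * S.r k := by
  have h : S.r k * (S.r k * S.r l) * (S.r k)⁻¹ = (S.r k * S.r l)⁻¹ := by
    rw [mul_inv_rev, S.r_inv hk, S.r_inv hl, ← mul_assoc, S.inv k hk, one_mul]
  have h2 : S.r k * (S.r k * S.r l)^m * (S.r k)⁻¹ = (S.r k * S.r l)^(-m) := by
    rw [← conj_zpow, h, zpow_neg, inv_zpow]
  rw [← h2]; group

theorem G_two {k : ℕ} (hk : k + 1 < n) : ∀ g ∈ S.G k (k+2), ∃ m : ℤ,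
    g = (S.r k * S.r (k+1))^m ∨ g = (S.r k * S.r (k+1))^m * S.r k := by
  have h0 : k < n := by omega
  refine S.G_induct_right (by omega) ⟨0, by simp⟩ ?_
  rintro l h1 h2 g _ ⟨m, h | h⟩
  · obtain rfl | rfl : l = k ∨ l = k + 1 := by omega
    · exact ⟨m, Or.inr (by rw [h])⟩
    · refine ⟨m - 1, Or.inr ?_⟩
      rw [h, zpow_sub_one, mul_assoc, mul_inv_rev, S.r_inv h0, S.r_inv hk, mul_assoc, S.inv k h0,
        mul_one]
  · obtain rfl | rfl : l = k ∨ l = k + 1 := by omega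
    · refine ⟨m, Or.inl ?_⟩
      rw [h, mul_assoc, S.inv _ h0, mul_one]
    · refine ⟨m+1, Or.inl ?_⟩
      rw [h, zpow_add_one, mul_assoc]

variable [Finite X]

theorem poly {k : ℕ} (hk : k + 1 < n) (x : X) (m : ℤ) :
    ((S.r k * S.r (k+1))^m) x = x ↔ ((S.V k (k+2) : ℕ) : ℤ) ∣ m := by
  have h0 : k < n := by omega
  have : Fintype X := Fintype.ofFinite X
  set t := S.r k * S.r (k+1) with ht
  let A : Set X := MulAction.orbit (Subgroup.zpowers t) x
  have hA : ∀ y, y ∈ A ↔ ∃ m : ℤ, (t^m) x = y := by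
    intro y
    constructor
    · rintro ⟨⟨_, m, rfl⟩, rfl⟩
      exact ⟨m, rfl⟩
    · rintro ⟨m, rfl⟩
      exact ⟨⟨_, m, rfl⟩, rfl⟩
  have h1 : S.orb k (k+2) x = A ∪ (S.r k) '' A := by
    ext y
    constructor
    · rintro ⟨g, hg, rfl⟩
      obtain ⟨m, rfl | rfl⟩ := S.G_two hk g hg
      · left; rw [hA]; exact ⟨m, rfl⟩
      · right
        refine ⟨(t^(-m)) x, (hA _).2 ⟨-m, rfl⟩, ?_⟩
        rw [← Perm.mul_apply, S.dihedral_conj h0 hk, neg_neg]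
    · have htm : ∀ m : ℤ, t^m ∈ S.G k (k+2) := fun m => Subgroup.zpow_mem _
        (Subgroup.mul_mem _ (r_mem _ le_rfl (by omega)) (r_mem _ (by omega) (by omega))) _
      rintro (hy | ⟨z, hz, rfl⟩)
      · obtain ⟨m, rfl⟩ := (hA _).1 hy
        exact ⟨_, htm m, rfl⟩
      · obtain ⟨m, rfl⟩ := (hA _).1 hz
        exact ⟨_, Subgroup.mul_mem _ (r_mem _ le_rfl (by omega)) (htm m), rfl⟩
  have hcol : ∀ y ∈ A, S.col y = S.col x := by
    intro y hy
    obtain ⟨m, rfl⟩ := (hA _).1 hy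
    exact S.col_rr_zpow h0 hk m x
  have h2 : Disjoint A ((S.r k) '' A) := by
    rw [Set.disjoint_left]
    rintro y hy ⟨z, hz, rfl⟩
    have h3 := hcol _ hy
    rw [S.col_r k h0, hcol z hz] at h3
    simp at h3
  have h3 := S.N_const (i := k) (j := k+2) (by omega) x
  rw [h1, Set.ncard_union_eq h2, Set.ncard_image_of_injective _ (S.r k).injective,
    S.N_eq_V (by omega), S.N_one hk] at h3
  have h4 : Function.minimalPeriod (t • ·) x = S.V k (k+2) := by
    rw [MulAction.minimalPeriod_eq_card (a := t) (b := x), ← Nat.card_eq_fintype_card]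
    have : Nat.card A = A.ncard := rfl
    show Nat.card A = _
    omega
  rw [← h4]
  exact MulAction.zpow_smul_eq_iff_minimalPeriod_dvd (a := t) (b := x)

theorem V_pos {i j : ℕ} (hj : j ≤ n) : 0 < S.V i j := by
  have := S.N_pos i j
  rw [S.N_eq_V hj] at this
  exact Nat.pos_of_mul_pos_right this

theorem poly_pow {k : ℕ} (hk : k + 1 < n) : (S.r k * S.r (k+1))^(S.V k (k+2)) = 1 := by
  ext x
  have := (S.poly hk x (S.V k (k+2))).2 dvd_rfl
  rw [zpow_natCast] at this
  simpa using this

theorem N_two {k : ℕ} (hk : k + 1 < n) : S.N k (k+2) = 2 * S.V k (k+2) := by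
  rw [S.N_eq_V (by omega), S.N_one hk, mul_comm]

theorem F_two {k : ℕ} (hk : k + 1 < n) : S.F k (k+2) = S.V k (k+2) := by
  have := S.N_eq_F (i := k) (j := k+2) (by omega)
  rw [show k + 2 - 1 = k + 1 by omega, S.N_two hk, S.N_one (by omega)] at this
  omega

theorem braid {k : ℕ} (hk : k + 1 < n) (h : S.V k (k+2) = 3) :
    S.r k * S.r (k+1) * S.r k = S.r (k+1) * S.r k * S.r (k+1) := by
  have h0 : k < n := by omega
  have := S.poly_pow hk
  rw [h] at this
  have h2 : (S.r k * S.r (k+1) * S.r k) * (S.r (k+1) * S.r k * S.r (k+1)) = 1 := by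
    rw [← this]; simp only [pow_succ, pow_zero, one_mul, mul_assoc]
  rw [mul_eq_one_iff_eq_inv] at h2
  rw [h2]
  simp only [mul_inv_rev, S.r_inv h0, S.r_inv hk, mul_assoc]

theorem p1_ge (hn : 2 ≤ n) : 3 ≤ S.V 0 2 := by
  by_contra hlt
  have h1 := S.V_pos (i := 0) (j := 2) hn
  have h2 : S.V 0 2 ∣ 2 := by
    have : S.V 0 2 = 1 ∨ S.V 0 2 = 2 := by omega
    rcases this with h | h <;> rw [h]
    exact one_dvd _
  have h3 : (S.r 0 * S.r 1)^2 = 1 := by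
    ext x
    have := (S.poly (k := 0) (by omega) x 2).2 (by exact_mod_cast h2)
    simpa using this
  have h4 : S.r 0 * S.r 1 = S.r 1 * S.r 0 := by
    rw [pow_two, mul_eq_one_iff_eq_inv, mul_inv_rev, S.r_inv (by omega), S.r_inv (by omega)] at h3
    exact h3
  have h5 := S.chir (S.r 0) (by
    intro i hi
    rcases i with _ | _ | i
    · rfl
    · exact h4
    · exact S.comm 0 _ (by omega) hi (by omega)) S.base
  rw [S.col_r 0 (by omega)] at h5
  simp at h5

theorem pl_ge (hn : 2 ≤ n) : 3 ≤ S.F (n-2) n := by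
  rw [← S.dual_V (a := 0) (b := 2) (by omega) (by omega) (by omega)]
  exact S.dual.p1_ge hn

/-- all polygonal sections are triangles -/
def T3 (i j : ℕ) : Prop := ∀ k, i ≤ k → k + 2 ≤ j → S.V k (k+2) = 3

/-- partial products -/
def u (i : ℕ) (k : ℕ) : Perm X := Nat.rec 1 (fun k f => f * S.r (i+k)) k

theorem u_zero (i : ℕ) : S.u i 0 = 1 := rfl

theorem u_succ (i k : ℕ) : S.u i (k+1) = S.u i k * S.r (i+k) := rfl

theorem u_mem (i k : ℕ) : S.u i k ∈ S.G i (i+k) := by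
  induction k with
  | zero => exact Subgroup.one_mem _
  | succ k ih => exact Subgroup.mul_mem _ (GG_mono _ le_rfl (by omega) ih) (r_mem _ (by omega) (by omega))

theorem u_mem' {i k j : ℕ} (h : i + k ≤ j) : S.u i k ∈ S.G i j :=
  GG_mono _ le_rfl h (S.u_mem i k)

theorem u_comm {i k m : ℕ} (h : i + k < m) (hm : m < n) : S.u i k * S.r m = S.r m * S.u i k :=
  S.comm_G (c := m) (d := m+1) h hm (S.u_mem i k) (r_mem _ le_rfl (by omega))

theorem u_braid {i j k m : ℕ} (hT : S.T3 i j) (hj : j ≤ n) (hk : i + k ≤ j) (him : i ≤ m)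
    (hm : m + 1 < i + k) : S.u i k * S.r m = S.r (m+1) * S.u i k := by
  induction k with
  | zero => omega
  | succ k ih =>
    by_cases h : m + 1 < i + k
    · rw [u_succ, mul_assoc, ← S.comm m (i+k) (by omega) (by omega) (by omega), ← mul_assoc,
        ih (by omega) h, mul_assoc]
    · obtain ⟨k, rfl⟩ : ∃ l, k = l + 1 := ⟨k-1, by omega⟩
      obtain rfl : m = i + k := by omega
      have hb := S.braid (k := i+k) (by omega) (hT _ (by omega) (by omega))
      rw [u_succ, u_succ, ← add_assoc, mul_assoc, mul_assoc, ← mul_assoc (S.r _) (S.r _) (S.r (i+k)), hb,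
        mul_assoc, ← mul_assoc, S.u_comm (by omega) (by omega)]
      simp only [mul_assoc]

theorem G_u {i j : ℕ} (hT : S.T3 i j) (hj : j ≤ n) :
    ∀ g ∈ S.G i j, ∃ k, i + k ≤ max i j ∧ ∃ h ∈ S.G (i+1) j, g = h * S.u i k := by
  refine S.G_induct_right hj ⟨0, by omega, 1, Subgroup.one_mem _, by simp [u_zero]⟩ ?_
  rintro m h1 h2 _ _ ⟨k, hk, h, hh, rfl⟩
  rcases lt_trichotomy (i+k) m with h3 | h3 | h3
  · refine ⟨k, hk, h * S.r m, Subgroup.mul_mem _ hh (r_mem _ (by omega) h2), ?_⟩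
    rw [mul_assoc, S.u_comm h3 (by omega), mul_assoc]
  · subst h3
    exact ⟨k+1, by omega, h, hh, by rw [mul_assoc, u_succ]⟩
  · by_cases h4 : m + 1 = i + k
    · obtain ⟨k, rfl⟩ : ∃ l, k = l + 1 := ⟨k-1, by omega⟩
      obtain rfl : m = i + k := by omega
      refine ⟨k, by omega, h, hh, ?_⟩
      rw [u_succ, mul_assoc, mul_assoc, S.inv _ (by omega), mul_one]
    · refine ⟨k, hk, h * S.r (m+1), Subgroup.mul_mem _ hh (r_mem _ (by omega) (by omega)), ?_⟩
      rw [mul_assoc, S.u_braid hT hj (by omega) h1 (by omega), mul_assoc]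

theorem T3_V {i j : ℕ} (hT : S.T3 i j) (hij : i ≤ j) (hj : j ≤ n) : S.V i j ≤ j - i + 1 := by
  rw [← S.V_card hj S.base]
  have : S.orb (i+1) j '' S.orb i j S.base ⊆
      (fun k => S.orb (i+1) j (S.u i k S.base)) '' (Finset.range (j-i+1) : Set ℕ) := by
    rintro _ ⟨_, ⟨g, hg, rfl⟩, rfl⟩
    obtain ⟨k, hk, h, hh, rfl⟩ := S.G_u hT hj g hg
    refine ⟨k, by simp; omega, ?_⟩
    simp only
    rw [S.orb_eq_iff]
    exact ⟨h, hh, rfl⟩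
  refine (Set.ncard_le_ncard this (Set.toFinite _)).trans ?_
  refine (Set.ncard_image_le (Set.toFinite _)).trans ?_
  rw [Set.ncard_coe_finset, Finset.card_range]

theorem T3_mono {i j a b : ℕ} (h : S.T3 i j) (ha : i ≤ a) (hb : b ≤ j) : S.T3 a b :=
  fun k h1 h2 => h k (by omega) (by omega)

theorem T3_N {i j : ℕ} (hT : S.T3 i j) (hij : i ≤ j) (hj : j ≤ n) :
    S.N i j ≤ (j - i + 1).factorial := by
  obtain ⟨d, rfl⟩ := Nat.exists_eq_add_of_le hij
  induction d generalizing i with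
  | zero => simp [S.N_empty]
  | succ d ih =>
    have h1 := ih (i := i+1) (S.T3_mono hT (by omega) (by omega)) (by omega) (by omega)
    have h2 := S.T3_V hT hij hj
    rw [S.N_eq_V (by omega)]
    have e1 : i + 1 + d - (i+1) + 1 = d + 1 := by omega
    have e2 : i + (d + 1) - i + 1 = d + 1 + 1 := by omega
    rw [e1] at h1
    rw [e2] at h2 ⊢
    rw [Nat.factorial_succ, show i + (d+1) = i + 1 + d by ring] at *
    exact Nat.mul_le_mul h2 h1

theorem dual_T3 {a b i j : ℕ} (h1 : a + j = n) (h2 : b + i = n) : S.dual.T3 a b ↔ S.T3 i j := by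
  have key : ∀ k, k + 2 ≤ n → S.dual.V (n - k - 2) (n-k-2+2) = S.V k (k+2) := by
    intro k hk
    rw [← S.F_two (by omega)]
    exact S.dual_V (by omega) (by omega) (by omega)
  constructor
  · intro h k hk1 hk2
    rw [← key k (by omega)]
    exact h _ (by omega) (by omega)
  · intro h k hk1 hk2
    have := h (n-k-2) (by omega) (by omega)
    rw [← key _ (by omega), show n - (n-k-2) - 2 = k by omega] at this
    exact this

theorem count3 {i : ℕ} (hi : i + 3 ≤ n) (h : S.NF i (i+3)) (hT : ¬ S.T3 i (i+3)) :
    48 ≤ S.N i (i+3) ∨ (S.V i (i+2) = 4 ∧ S.V (i+1) (i+3) = 4 ∧ 40 ≤ S.N i (i+3)) := by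
  have hp := S.V_ge h hi (i := i) (j := i+2) (by omega) (by omega) (by omega)
  have hq := S.V_ge h hi (i := i+1) (j := i+3) (by omega) (by omega) (by omega)
  have hV := S.V_lt (i := i) (j := i+2) hi (h _ _ (by omega) (by omega) (by omega))
  have hF := S.F_lt (i := i) (j := i+3) (by omega) hi (h _ _ (by omega) (by omega) (by omega))
  have e1 := S.N_eq_V (i := i) (j := i+3) hi
  have e2 := S.N_eq_F (i := i) (j := i+3) hi
  rw [show i + 3 = i + 1 + 2 by ring] at *
  rw [S.N_two (k := i+1) (by omega)] at e1
  rw [show i + 1 + 2 - 1 = i + 2 by omega, S.N_two (k := i) (by omega)] at e2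
  rw [S.F_two (k := i+1) (by omega)] at hF
  have hT' : ¬ (S.V i (i+2) = 3 ∧ S.V (i+1) (i+1+2) = 3) := by
    rintro ⟨a, b⟩
    apply hT
    intro k h1 h2
    obtain rfl | rfl : k = i ∨ k = i + 1 := by omega
    · exact a
    · exact b
  generalize S.V i (i+2) = p at *
  generalize S.V (i+1) (i+1+2) = q at *
  generalize S.V i (i+1+2) = v at *
  generalize S.F i (i+1+2) = f at *
  generalize S.N i (i+1+2) = N at *
  have hp : 3 ≤ p := by omega
  have hq : 3 ≤ q := by omega
  by_cases h1 : q ≥ 6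
  · left; nlinarith
  by_cases h2 : p ≥ 6
  · left; nlinarith
  interval_cases p <;> interval_cases q <;> omega

theorem count4 {i : ℕ} (hi : i + 4 ≤ n) (h : S.NF i (i+4)) (hT : ¬ S.T3 i (i+4)) :
    240 ≤ S.N i (i+4) := by
  have e1 := S.N_eq_V (i := i) (j := i+4) hi
  have e2 := S.N_eq_F (i := i) (j := i+4) hi
  rw [show i + 4 - 1 = i + 3 by omega] at e2
  rw [show i + 4 = i + 1 + 3 by ring] at e1
  have hV := S.V_ge h hi (i := i) (j := i+4) (by omega) (by omega) (by omega)
  have hF := S.F_ge h hi (i := i) (j := i+4) (by omega) (by omega) (by omega)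
  have hV1 := S.V_lt (i := i) (j := i+2) (by omega) (h _ _ (by omega) (by omega) (by omega))
  have hV2 := S.V_lt (i := i) (j := i+3) (by omega) (h _ _ (by omega) (by omega) (by omega))
  have hV0 := S.V_ge h hi (i := i) (j := i+2) (by omega) (by omega) (by omega)
  have c1 := S.count3 (i := i) (by omega) (S.NF_mono h (by omega) (by omega))
  have c2 := S.count3 (i := i+1) (by omega) (S.NF_mono h (by omega) (by omega))
  rw [show i + 1 + 2 = i + 3 by ring] at c2
  rw [show i + 1 + 3 = i + 4 by ring] at e1 c2
  rw [show i + 2 + 1 = i + 3 by ring] at hV1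
  rw [show i + 3 + 1 = i + 4 by ring] at hV2
  have hF' : 5 ≤ S.F i (i+4) := by omega
  have hV' : 5 ≤ S.V i (i+4) := by omega
  by_cases h2 : S.T3 (i+1) (i+4)
  · have h3 : ¬ S.T3 i (i+3) := by
      intro h3
      apply hT
      intro k hk1 hk2
      by_cases hk : k = i
      · exact h3 k (by omega) (by omega)
      · exact h2 k (by omega) (by omega)
    have h4 : S.V (i+1) (i+3) = 3 := h2 (i+1) (by omega) (by omega)
    have := c1 h3
    have : 48 ≤ S.N i (i+3) := by omega
    rw [e2]; nlinarith
  · rcases c2 h2 with c2 | ⟨c3, c4, c5⟩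
    · rw [e1]; nlinarith
    · have h3 : ¬ S.T3 i (i+3) := by
        intro h3
        have := h3 (i+1) (by omega) (by omega)
        rw [show i + 1 + 2 = i + 3 by ring] at this
        omega
      rcases c1 h3 with c1 | c1
      · rw [e2]; nlinarith
      · have : 6 ≤ S.V i (i+4) := by omega
        rw [e1]; nlinarith

theorem count {i j : ℕ} (hij : i + 4 ≤ j) (hj : j ≤ n) (h : S.NF i j) (hT : ¬ S.T3 i j) :
    2 * (j - i + 1).factorial ≤ S.N i j := by
  obtain ⟨d, rfl⟩ := Nat.exists_eq_add_of_le hij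
  induction d generalizing i with
  | zero =>
    have := S.count4 hj h hT
    simpa [Nat.factorial] using this
  | succ d ih =>
    have hV := S.V_ge h hj (i := i) (j := i+4+(d+1)) (by omega) (by omega) (by omega)
    have hF := S.F_ge h hj (i := i) (j := i+4+(d+1)) (by omega) (by omega) (by omega)
    have e0 : i + 4 + (d+1) - i + 1 = (d + 5) + 1 := by omega
    rw [e0] at hV hF ⊢
    rw [Nat.factorial_succ]
    by_cases h2 : S.T3 (i+1) (i+4+(d+1))
    · have h3 : ¬ S.T3 i (i+4+d) := by
        intro h3
        apply hT
        intro k hk1 hk2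
        by_cases hk : k = i
        · exact h3 k (by omega) (by omega)
        · exact h2 k (by omega) (by omega)
      have := ih (i := i) (by omega) (by omega) (S.NF_mono h (by omega) (by omega)) h3
      rw [S.N_eq_F hj, show i + 4 + (d+1) - 1 = i + 4 + d by omega]
      rw [show i + 4 + d - i + 1 = d + 5 by omega] at this
      calc _ = (d+5+1) * (2 * (d+5).factorial) := by ring
        _ ≤ _ := Nat.mul_le_mul hF this
    · rw [show i + 4 + (d+1) = i + 1 + 4 + d by ring] at *
      have := ih (i := i+1) (by omega) (by omega) (S.NF_mono h (by omega) (by omega)) h2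
      rw [S.N_eq_V hj]
      rw [show i + 1 + 4 + d - (i+1) + 1 = d + 5 by omega] at this
      calc _ = (d+5+1) * (2 * (d+5).factorial) := by ring
        _ ≤ _ := Nat.mul_le_mul hV this

end FlagSys
end ChiralAux

set_option linter.unusedSectionVars false
set_option linter.unusedVariables false

namespace ChiralAux
open Equiv
variable {X : Type}
namespace FlagSys
variable {n : ℕ} (S : FlagSys n X)

/-- the other end of the base edge -/
def en (b : ℕ) (x : X) : Set X := S.orb 1 b (S.r 0 x)

theorem en_inv {b : ℕ} (h2 : 1 ≤ b) (hb : b ≤ n) {w : Perm X} (hw : w ∈ S.G 2 b) (x : X) :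
    S.en b (w x) = S.en b x := by
  symm
  rw [en, en, S.orb_eq_iff]
  refine ⟨w, GG_mono _ (by omega) le_rfl hw, ?_⟩
  have := S.comm_G (a := 0) (b := 1) (by omega) hb (r_mem S.r le_rfl (by omega : 0 < 1)) hw
  exact (congrArg (fun e => e x) this).symm

theorem en_ne_self {b : ℕ} (h2 : 1 ≤ b) (hb : b ≤ n) {x y : X} (hy : y ∈ S.orb 1 b x) :
    S.en b y ≠ S.orb 1 b x := by
  intro h
  have h1 : S.r 0 y ∈ S.orb 1 b y := by
    rw [← S.orb_eq_iff.2 hy, ← h]; exact S.mem_orb_self ..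
  have h3 : S.r 0 y ∈ S.orb 0 1 y := S.r_mem_orb (by omega) (by omega) _
  have h4 := S.orb_inter' hb (by omega) h1 h3 (a := 1) (b := 1) (by omega) (by omega)
  rw [S.orb_empty le_rfl] at h4
  exact S.r_ne (by omega) y h4

variable [Finite X]

theorem en_r1 {b : ℕ} (h2 : 2 ≤ b) (hb : b ≤ n) (x : X) : S.en b (S.r 1 x) ≠ S.en b x := by
  intro h
  rw [en, en, S.orb_eq_iff] at h
  have h0 : 0 < n := by omega
  have h1 : 1 < n := by omega
  have h3 : S.r 0 x ∈ S.orb 0 2 (S.r 0 (S.r 1 x)) := by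
    refine ⟨S.r 0 * S.r 1 * S.r 0, ?_, ?_⟩
    · exact Subgroup.mul_mem _ (Subgroup.mul_mem _ (r_mem _ le_rfl (by omega))
        (r_mem _ (by omega) (by omega))) (r_mem _ le_rfl (by omega))
    · simp only [Perm.mul_apply, S.rr h0, S.rr h1]
  have h4 := S.orb_inter' hb (by omega) h h3 (a := 1) (b := 2) (by omega) (by omega)
  rw [S.orb_one h1] at h4
  rcases h4 with h4 | h4
  · exact S.r_ne h1 x ((S.r 0).injective h4).symm
  · have h5 := (S.poly (k := 0) (by omega) x 2).1 (by
      rw [Set.mem_singleton_iff] at h4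
      rw [zpow_ofNat, pow_two]
      simp only [Perm.mul_apply, zero_add]
      rw [← h4, S.rr h0])
    have h6 := S.p1_ge (by omega)
    have h7 : S.V 0 2 ∣ 2 := by exact_mod_cast h5
    have := Nat.le_of_dvd (by omega) h7
    omega

theorem en_bound {b : ℕ} (h2 : 1 ≤ b) (hb : b ≤ n) (x : X) :
    (S.en b '' S.orb 1 b x).ncard + 1 ≤ S.V 0 b := by
  rw [← S.V_card hb x, ← Set.ncard_insert_of_notMem (a := S.orb 1 b x) _ (Set.toFinite _)]
  · apply Set.ncard_le_ncard _ (Set.toFinite _)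
    rintro A (rfl | ⟨y, hy, rfl⟩)
    · exact ⟨x, S.mem_orb_self .., rfl⟩
    · exact ⟨S.r 0 y, S.orb_trans (S.orb_mono (by omega) le_rfl _ hy)
        (S.r_mem_orb (by omega) (by omega) _), rfl⟩
  · rintro ⟨y, hy, h⟩
    exact S.en_ne_self h2 hb hy h

/-- number of end vertices -/
noncomputable def c (b j : ℕ) : ℕ := (S.en b '' S.orb 1 j S.base).ncard

theorem en_aut {b : ℕ} (h2 : 1 ≤ b) (hb : b ≤ n) {f : Perm X} (hf : ∀ i < n, f * S.r i = S.r i * f)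
    (x : X) : S.en b (f x) = f '' S.en b x := by
  rw [en, en, S.aut_orb hb hf]
  congr 1
  exact (congrArg (fun e => e x) (hf 0 (by omega))).symm

theorem c_const {b j : ℕ} (h2 : 2 ≤ j) (hjb : j ≤ b) (hb : b ≤ n) (x : X) :
    (S.en b '' S.orb 1 j x).ncard = S.c b j := by
  obtain ⟨y, hy, hc⟩ := S.exists_col (i := 1) (j := j) le_rfl (by omega) (by omega) x (S.col S.base)
  obtain ⟨f, hf, rfl⟩ := S.aut _ _ hc.symm
  rw [S.orb_eq_iff.2 hy, ← S.aut_orb (by omega) hf, c, Set.image_image]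
  simp only [S.en_aut (by omega) hb hf]
  rw [← Set.image_image (fun A => f '' A) (S.en b)]
  exact Set.ncard_image_of_injective _ (Set.image_injective.2 f.injective)

theorem c_ge {b j : ℕ} (h2 : 2 ≤ j) (hjb : j ≤ b) (hb : b ≤ n) : 2 ≤ S.c b j := by
  have h1 : ({S.en b (S.r 1 S.base), S.en b S.base} : Set (Set X)).ncard = 2 :=
    Set.ncard_pair (S.en_r1 (by omega) hb _)
  rw [← h1, c]
  apply Set.ncard_le_ncard _ (Set.toFinite _)
  rintro A (rfl | rfl)
  · exact ⟨_, S.r_mem_orb le_rfl (by omega) _, rfl⟩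
  · exact ⟨_, S.mem_orb_self .., rfl⟩

theorem c_mono {b j : ℕ} : S.c b j ≤ S.c b (j+1) :=
  Set.ncard_le_ncard (Set.image_mono (S.orb_mono le_rfl (by omega) _)) (Set.toFinite _)

theorem c_mono' {b j k : ℕ} (h : j ≤ k) : S.c b j ≤ S.c b k :=
  Set.ncard_le_ncard (Set.image_mono (S.orb_mono le_rfl h _)) (Set.toFinite _)

theorem c_le {b j : ℕ} (hjb : j ≤ b) (hb : b ≤ n) (hb1 : 1 ≤ b) : S.c b j + 1 ≤ S.V 0 b :=
  (Nat.add_le_add_right (S.c_mono' hjb) 1).trans (S.en_bound hb1 hb _)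

theorem c_dvd {b j : ℕ} (h2 : 2 ≤ j) (hjb : j ≤ b) (hb : b ≤ n) : S.c b j ∣ S.V 1 j := by
  by_cases h3 : j = 2
  · subst h3
    rw [S.V_one (i := 1) (by omega)]
    have h4 := S.c_ge (b := b) le_rfl hjb hb
    have h5 : S.c b 2 ≤ 2 := by
      refine le_trans ?_ (S.N_one (i := 1) (by omega)).le
      exact Set.ncard_image_le (s := S.orb 1 2 S.base) (Set.toFinite _)
    rw [show S.c b 2 = 2 by omega]
  have hfib : ∀ x, S.col x = S.col S.base → x ∈ S.orb 1 j S.base →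
      {y | y ∈ S.orb 1 j S.base ∧ S.en b y = S.en b x}.ncard =
      {y | y ∈ S.orb 1 j S.base ∧ S.en b y = S.en b S.base}.ncard := by
    intro x hc hx
    obtain ⟨f, hf, rfl⟩ := S.aut _ _ hc.symm
    rw [← Set.ncard_image_of_injective {y | y ∈ S.orb 1 j S.base ∧ S.en b y = S.en b S.base}
      f.injective]
    congr 1
    ext y
    constructor
    · rintro ⟨h1, h2⟩
      refine ⟨f⁻¹ y, ⟨?_, ?_⟩, by simp⟩
      · have h3 := S.aut_orb (i := 1) (by omega : j ≤ n) hf S.base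
        rw [← S.orb_eq_iff.2 hx] at h3
        rw [← h3] at h1
        obtain ⟨z, hz, rfl⟩ := h1
        simpa using hz
      · have h4 : S.en b (f (f⁻¹ y)) = S.en b (f S.base) := by simpa using h2
        rw [S.en_aut (by omega) hb hf, S.en_aut (by omega) hb hf] at h4
        exact Set.image_injective.2 f.injective h4
    · rintro ⟨z, ⟨h1, h2⟩, rfl⟩
      refine ⟨?_, ?_⟩
      · rw [S.orb_eq_iff.2 hx, ← S.aut_orb (by omega) hf]
        exact ⟨z, h1, rfl⟩
      · rw [S.en_aut (by omega) hb hf, S.en_aut (by omega) hb hf, h2]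
  have hN := ncard_fiber (S.orb 1 j S.base) (S.en b)
      ({y | y ∈ S.orb 1 j S.base ∧ S.en b y = S.en b S.base}.ncard) (by
    intro x hx
    by_cases hc : S.col x = S.col S.base
    · exact hfib x hc hx
    · have h4 := S.en_inv (by omega) hb (w := S.r 2) (r_mem _ le_rfl (by omega)) x
      rw [← h4]
      apply hfib
      · rw [S.col_r 2 (by omega)]
        cases h : S.col x <;> cases h' : S.col S.base <;> simp_all
      · exact S.orb_trans hx (S.r_mem_orb (by omega) (by omega) _))
  have hN2 := ncard_fiber {y | y ∈ S.orb 1 j S.base ∧ S.en b y = S.en b S.base} (S.orb 2 j)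
    (S.N 2 j) (by
    intro x hx
    rw [← S.N_const (by omega : j ≤ n) x]
    congr 1
    ext z
    constructor
    · rintro ⟨h1, h2⟩
      exact S.orb_eq_iff.1 h2.symm
    · intro h
      refine ⟨⟨S.orb_trans hx.1 (S.orb_mono (by omega) le_rfl _ h), ?_⟩, (S.orb_eq_iff.2 h).symm⟩
      obtain ⟨g, hg, rfl⟩ := h
      rw [S.en_inv (by omega) hb (GG_mono _ le_rfl hjb hg)]
      exact hx.2)
  rw [hN2] at hN
  change S.N 1 j = _ * S.c b j at hN
  rw [S.N_eq_V (by omega), mul_comm, mul_assoc] at hN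
  have := Nat.eq_of_mul_eq_mul_left (S.N_pos 2 j) hN
  exact Dvd.intro_left _ this.symm

theorem V_alpha3 {b j : ℕ} (h2 : 2 ≤ j) (hjb : j ≤ b) (hb : b ≤ n) (hα : S.V 0 b = 3) :
    2 ∣ S.V 1 j := by
  have h1 := S.c_ge h2 hjb hb
  have h3 := S.c_le hjb hb (by omega)
  have h4 := S.c_dvd h2 hjb hb
  rwa [show S.c b j = 2 by omega] at h4

theorem VK_alpha3 {b e j : ℕ} (h2 : 2 ≤ j) (hje : j ≤ e) (hjb : j ≤ b) (hb : b ≤ n) (he : e ≤ n)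
    (hα : S.V 0 b = 3) (hNF : S.NF 1 e) : 2 * (j-1) ≤ S.V 1 j := by
  induction j, h2 using Nat.le_induction with
  | base => rw [S.V_one (i := 1) (by omega)]
  | succ j h2 ih =>
    have h3 := ih (by omega) (by omega)
    have h4 := S.V_lt (i := 1) (j := j) (by omega) (hNF _ _ le_rfl (by omega) (by omega))
    have h5 := S.V_alpha3 (j := j) h2 (by omega) hb hα
    have h6 := S.V_alpha3 (j := j+1) (by omega) (by omega) hb hα
    omega

theorem VK_alpha4 {b e j : ℕ} (h2 : 2 ≤ j) (hje : j ≤ e) (hjb : j ≤ b) (hb : b ≤ n) (he : e ≤ n)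
    (hα : S.V 0 b ≤ 4) (hNF : S.NF 1 e) :
    2 * (j-1) ≤ S.V 1 j + 1 ∧ (S.c b j = 2 → 2 * (j-1) ≤ S.V 1 j) := by
  induction j, h2 using Nat.le_induction with
  | base => rw [S.V_one (i := 1) (by omega)]; omega
  | succ j h2 ih =>
    have h3 := ih (by omega) (by omega)
    have h4 := S.V_lt (i := 1) (j := j) (by omega) (hNF _ _ le_rfl (by omega) (by omega))
    have h5 := S.c_ge (j := j) h2 (by omega) hb
    have h6 := S.c_le hjb hb (by omega)
    have h7 := S.c_mono (b := b) (j := j)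
    have h8 := S.c_dvd (j := j) h2 (by omega) hb
    have h9 := S.c_dvd (j := j+1) (by omega) hjb hb
    have h10 : S.c b j = 2 ∨ S.c b j = 3 := by omega
    have h11 : S.c b (j+1) = 2 ∨ S.c b (j+1) = 3 := by omega
    rcases h10 with h10 | h10 <;> rcases h11 with h11 | h11 <;> rw [h10] at h8 h3 <;>
      rw [h11] at h9 ⊢ <;> omega

/-- run lemma -/
theorem run {b j : ℕ} (h2 : 2 ≤ j) (hjb : j ≤ b) (hb : b ≤ n) (hT : S.T3 1 j) :
    j + 1 ≤ S.V 0 b := by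
  have key : ∀ k l, l < k → 1 + k ≤ j →
      S.en b (S.u 1 k S.base) ≠ S.en b (S.u 1 l S.base) := by
    intro k l hlk hk h
    have e1 : ∀ l, l < k → ∃ v ∈ S.G 2 b, S.u 1 k * S.u 1 l = v * S.u 1 k := by
      intro l hl
      induction l with
      | zero => exact ⟨1, Subgroup.one_mem _, by simp [u_zero]⟩
      | succ l ih =>
        obtain ⟨v, hv, h⟩ := ih (by omega)
        refine ⟨v * S.r (1+l+1), Subgroup.mul_mem _ hv (r_mem _ (by omega) (by omega)), ?_⟩
        rw [u_succ, ← mul_assoc, h, mul_assoc, S.u_braid hT (by omega) (by omega) (by omega)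
          (by omega), mul_assoc]
    have e2 : ∀ k, 1 + k ≤ j → 0 < k → ∃ w ∈ S.G 2 b, S.u 1 k = S.r 1 * w := by
      intro k hk h0
      induction k, h0 using Nat.le_induction with
      | base => exact ⟨1, Subgroup.one_mem _, by simp [u]⟩
      | succ k h0 ih =>
        obtain ⟨w, hw, h⟩ := ih (by omega)
        exact ⟨w * S.r (1+k), Subgroup.mul_mem _ hw (r_mem _ (by omega) (by omega)),
          by rw [u_succ, h, mul_assoc]⟩
    obtain ⟨v, hv, h1⟩ := e1 l hlk
    obtain ⟨w, hw, h3⟩ := e2 k hk (by omega)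
    have h4 : S.en b (S.u 1 k (S.u 1 l S.base)) = S.en b (S.u 1 k S.base) := by
      rw [← Perm.mul_apply, h1, Perm.mul_apply, S.en_inv (by omega) hb hv]
    rw [h, h3, Perm.mul_apply, ← S.en_inv (by omega) hb hw (S.u 1 l S.base)] at h4
    exact S.en_r1 (by omega) hb _ h4
  have h3 := S.en_bound (b := b) (by omega) hb S.base
  have h4 : ((fun k => S.en b (S.u 1 k S.base)) '' (Finset.range j : Set ℕ)).ncard = j := by
    rw [Set.InjOn.ncard_image, Set.ncard_coe_finset, Finset.card_range]
    intro k hk l hl h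
    simp only [Finset.coe_range, Set.mem_Iio] at hk hl
    rcases lt_trichotomy k l with h5 | h5 | h5
    · exact absurd h.symm (key l k h5 (by omega))
    · exact h5
    · exact absurd h (key k l h5 (by omega))
  have h5 : ((fun k => S.en b (S.u 1 k S.base)) '' (Finset.range j : Set ℕ)) ⊆
      S.en b '' S.orb 1 b S.base := by
    rintro _ ⟨k, hk, rfl⟩
    simp only [Finset.coe_range, Set.mem_Iio] at hk
    exact ⟨_, ⟨S.u 1 k, S.u_mem' (by omega), rfl⟩, rfl⟩
  have := Set.ncard_le_ncard h5 (Set.toFinite _)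
  omega

end FlagSys
end ChiralAux

set_option linter.unusedSectionVars false

namespace ChiralAux
open Equiv
variable {X : Type}
namespace FlagSys
variable {n : ℕ} (S : FlagSys n X)

theorem eq_of_reg {i j : ℕ} (h : S.Reg i j) {g g' : Perm X} (hg : g ∈ S.G i j) (hg' : g' ∈ S.G i j)
    {x : X} (hx : g x = g' x) : g = g' := by
  have : g'⁻¹ * g = 1 := by
    apply h _ (Subgroup.mul_mem _ (Subgroup.inv_mem _ hg') hg) x
    rw [Perm.mul_apply, hx]; simp
  exact (inv_mul_eq_one.1 this).symm

theorem r_notMem {i j k : ℕ} (hk : k < n) (hj : j ≤ n) (h : k < i ∨ j ≤ k) : S.r k ∉ S.G i j := by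
  intro hm
  have h1 : S.r k S.base ∈ S.orb i j S.base := ⟨_, hm, rfl⟩
  have h2 : S.r k S.base ∈ S.orb k (k+1) S.base := S.r_mem_orb le_rfl (by omega) _
  have h3 := S.orb_inter hj (by omega) h1 h2
  rw [S.orb_empty (by omega)] at h3
  exact S.r_ne hk _ h3

variable [Finite X]

theorem V_mono' {i j k : ℕ} (h : j ≤ k) (hk : k ≤ n) : S.V i j ≤ S.V i k := by
  induction k, h using Nat.le_induction with
  | base => exact le_rfl
  | succ k h ih => exact (ih (by omega)).trans (S.V_mono hk)

section group
variable {Γ : Type*} [Group Γ]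

theorem braid_conj {a b w : Γ} (h : a * b * a = b * a * b) (hw : w * b = b * w) :
    (w * a * w⁻¹) * b * (w * a * w⁻¹) = b * (w * a * w⁻¹) * b := by
  have hw' : w⁻¹ * b = b * w⁻¹ := by
    rw [inv_mul_eq_iff_eq_mul, ← mul_assoc, hw, mul_assoc, mul_inv_cancel, mul_one]
  calc _ = w * a * (w⁻¹ * b) * w * a * w⁻¹ := by group
    _ = w * (a * b * a) * w⁻¹ := by rw [hw']; group
    _ = w * (b * a * b) * w⁻¹ := by rw [h]
    _ = (w * b) * a * (b * w⁻¹) := by group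
    _ = _ := by rw [hw, ← hw']; group

theorem z_comm {a b c : Γ} (hab : a * b * a = b * a * b) (hac : a * c = c * a) :
    b * (a * b * c * b * a) = (a * b * c * b * a) * b := by
  calc b * (a * b * c * b * a) = (b * a * b) * c * b * a := by simp only [mul_assoc]
    _ = a * b * (a * c) * b * a := by rw [← hab]; simp only [mul_assoc]
    _ = a * b * c * (a * b * a) := by rw [hac]; simp only [mul_assoc]
    _ = _ := by rw [hab]; simp only [mul_assoc]

theorem z_r1 {a b c : Γ} (ha : a * a = 1) (hb : b * b = 1) (hab : a * b * a = b * a * b)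
    (h : a * b * c * b * a = b) : c = a := by
  have ha' : a⁻¹ = a := inv_eq_of_mul_eq_one_left ha
  have hb' : b⁻¹ = b := inv_eq_of_mul_eq_one_left hb
  have h1 : c = b⁻¹ * a⁻¹ * (a * b * c * b * a) * a⁻¹ * b⁻¹ := by group
  rw [h, ha', hb'] at h1
  calc c = b * (a * b * a) * b := by rw [h1]; simp only [mul_assoc]
    _ = (b * b) * a * (b * b) := by rw [hab]; simp only [mul_assoc]
    _ = a := by rw [hb, one_mul, mul_one]

theorem z_four {a b c : Γ} (ha : a * a = 1) (hb : b * b = 1) (hc : c * c = 1)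
    (hab : a * b * a = b * a * b) (hac : a * c = c * a)
    (ht : (b * c)^4 = 1) (h : a * b * c * b * a = (b * c)^2 * b) : c = a := by
  have ha' : a⁻¹ = a := inv_eq_of_mul_eq_one_left ha
  have hb' : b⁻¹ = b := inv_eq_of_mul_eq_one_left hb
  have hc' : c⁻¹ = c := inv_eq_of_mul_eq_one_left hc
  have h0 : (b*c)^2 * b = c * b * c := by
    have e1 : (b * c)^2 * b * (c * b * c)⁻¹ = 1 := by
      simp only [mul_inv_rev, hb', hc']
      rw [← ht]
      simp only [pow_succ, pow_zero, one_mul, mul_assoc]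
    exact mul_inv_eq_one.1 e1
  rw [h0] at h
  have h1 : b * c * b = a⁻¹ * (a * b * c * b * a) * a⁻¹ := by group
  rw [h, ha'] at h1
  have h2 : b * c * b = c * b * a * b * c := by
    calc b * c * b = (a * c) * b * (c * a) := by rw [h1]; simp only [mul_assoc]
      _ = c * (a * b * a) * c := by rw [← hac]; nth_rw 1 [hac]; simp only [mul_assoc]
      _ = _ := by rw [hab]; simp only [mul_assoc]
  have h3 : a = b⁻¹ * c⁻¹ * (c * b * a * b * c) * c⁻¹ * b⁻¹ := by group
  rw [← h2, hb', hc'] at h3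
  have h4 : a = (b * c)^4 * c⁻¹ := by
    rw [h3]
    simp only [pow_succ, pow_zero, one_mul, mul_assoc, mul_inv_cancel, mul_one]
  rw [h4, ht, one_mul, hc']

end group

set_option maxHeartbeats 1000000 in
theorem R1 (hn : 6 ≤ n) (hα : S.V 0 (n-1) = 3) (h24 : S.V 2 4 = 3) (hNF : S.NF 1 4) :
    72 ≤ S.N 1 4 := by
  have i0 : 0 < n := by omega
  have i1 : 1 < n := by omega
  have i2 : 2 < n := by omega
  have i3 : 3 < n := by omega
  have hp2 := S.V_alpha3 (b := n-1) (j := 3) (by omega) (by omega) (by omega) hα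
  have hV2 := S.V_alpha3 (b := n-1) (j := 4) (by omega) (by omega) (by omega) hα
  have hlt := S.V_lt (i := 1) (j := 3) (by omega) (hNF _ _ le_rfl (by omega) (by omega))
  have hp3 := S.V_ge hNF (by omega) (i := 1) (j := 3) (by omega) (by omega) (by omega)
  have hF4 := S.F_ge hNF (by omega) (i := 1) (j := 4) (by omega) (by omega) (by omega)
  have e1 := S.N_eq_V (i := 1) (j := 4) (by omega)
  have e2 := S.N_eq_F (i := 1) (j := 4) (by omega)
  have n24 := S.N_two (k := 2) (by omega)
  have n13 := S.N_two (k := 1) (by omega)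
  norm_num at e1 e2 n24 n13 hlt hp3 hF4
  rw [n24, h24] at e1
  rw [n13] at e2
  -- the crucial claim
  suffices hcl : S.V 1 3 ≠ 4 ∧ (S.V 1 3 = 6 → 6 ≤ S.F 1 4) by
    obtain ⟨h4, h6⟩ := hcl
    by_contra hlt72
    have hp8 : S.V 1 3 = 6 ∨ S.V 1 3 = 8 := by omega
    rcases hp8 with h | h
    · have := h6 h
      rw [h] at e2
      omega
    · rw [h] at e2
      omega
  have p1 : S.V 0 2 = 3 := by
    have := S.p1_ge (by omega)
    have := S.V_mono' (i := 0) (j := 2) (k := n-1) (by omega) (by omega)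
    omega
  have b01 := S.braid (k := 0) (by omega) p1
  have b23 := S.braid (k := 2) (by omega) h24
  norm_num at b01 b23
  have c02 := S.comm 0 2 i0 i2 (by omega)
  have c03 := S.comm 0 3 i0 i3 (by omega)
  have c13 := S.comm 1 3 i1 i3 (by omega)
  set Φ := S.base with hΦ
  set z := S.r 0 * S.r 1 * S.r 2 * S.r 1 * S.r 0 with hz
  have reg : S.Reg 0 4 := S.reg_low (by omega)
  have zG : z ∈ S.G 0 3 := by
    have m0 : S.r 0 ∈ S.G 0 3 := r_mem _ (by omega) (by omega)
    have m1 : S.r 1 ∈ S.G 0 3 := r_mem _ (by omega) (by omega)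
    have m2 : S.r 2 ∈ S.G 0 3 := r_mem _ (by omega) (by omega)
    exact Subgroup.mul_mem _ (Subgroup.mul_mem _ (Subgroup.mul_mem _ (Subgroup.mul_mem _ m0 m1) m2)
      m1) m0
  -- z lies in D
  have zD : z ∈ S.G 1 3 := by
    have h1 : z Φ ∈ S.orb 1 (n-1) Φ := by
      set Ψ := S.r 1 (S.r 0 Φ) with hΨ
      have hc := S.c_le (b := n-1) (j := n-1) le_rfl (by omega) (by omega)
      have hc2 := S.c_const (b := n-1) (j := n-1) (by omega) le_rfl (by omega) Ψ
      have hne := S.en_r1 (b := n-1) (by omega) (by omega) Ψ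
      have hne2 := S.en_r1 (b := n-1) (by omega) (by omega) (S.r 2 Ψ)
      rw [S.en_inv (w := S.r 2) (by omega) (by omega) (r_mem _ le_rfl (by omega))] at hne2
      have heq : S.en (n-1) (S.r 1 (S.r 2 Ψ)) = S.en (n-1) (S.r 1 Ψ) := by
        by_contra hne3
        have h3 : ({S.en (n-1) (S.r 1 (S.r 2 Ψ)), S.en (n-1) (S.r 1 Ψ), S.en (n-1) Ψ} :
            Set (Set X)).ncard = 3 := by
          rw [Set.ncard_eq_three]
          exact ⟨_, _, _, hne3, hne2, hne, rfl⟩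
        have h4 : ({S.en (n-1) (S.r 1 (S.r 2 Ψ)), S.en (n-1) (S.r 1 Ψ), S.en (n-1) Ψ} :
            Set (Set X)) ⊆ S.en (n-1) '' S.orb 1 (n-1) Ψ := by
          have o1 : ∀ y, S.r 1 y ∈ S.orb 1 (n-1) y := fun y => S.r_mem_orb (by omega) (by omega) _
          have o2 : ∀ y, S.r 2 y ∈ S.orb 1 (n-1) y := fun y => S.r_mem_orb (by omega) (by omega) _
          rintro A (rfl | rfl | rfl)
          · exact ⟨_, S.orb_trans (o2 _) (o1 _), rfl⟩
          · exact ⟨_, o1 _, rfl⟩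
          · exact ⟨_, S.mem_orb_self .., rfl⟩
        have := Set.ncard_le_ncard h4 (Set.toFinite _)
        omega
      rw [en, en, hΨ, S.rr i1, S.rr i0] at heq
      rw [← heq]
      exact S.mem_orb_self ..
    obtain ⟨d, hd, hdz⟩ := S.orb_inter' (by omega) (by omega) h1 (⟨z, zG, rfl⟩ : z Φ ∈ S.orb 0 3 Φ)
      (a := 1) (b := 3) (by omega) (by omega)
    rw [← S.eq_of_reg reg (GG_mono _ (by omega) (by omega) hd) (GG_mono _ (by omega) (by omega) zG)
      hdz]
    exact hd
  have zr1 := z_comm b01 c02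
  rw [← hz] at zr1
  set t := S.r 1 * S.r 2 with ht
  have htp : ∀ (m : ℤ) (x : X), (t^m) x = x ↔ ((S.V 1 3 : ℕ) : ℤ) ∣ m := fun m x => S.poly i2 x m
  have htp1 : ∀ m : ℤ, ((S.V 1 3 : ℕ) : ℤ) ∣ m → t^m = 1 := by
    intro m hm
    ext x
    rw [(htp m x).2 hm]; rfl
  -- z is a reflection
  obtain ⟨m, hm⟩ : ∃ m : ℤ, z = t^m * S.r 1 := by
    obtain ⟨m, h | h⟩ := S.G_two i2 z zD
    · exfalso
      have h1 := S.col_rr_zpow i1 i2 m Φ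
      have h2 : S.col (z Φ) = S.col Φ := by rw [h]; exact h1
      simp only [hz, Perm.mul_apply, S.col_r 0 i0, S.col_r 1 i1, S.col_r 2 i2] at h2
      simp at h2
    · exact ⟨m, h⟩
  have h2m : ((S.V 1 3 : ℕ) : ℤ) ∣ 2 * m := by
    have hd := S.dihedral_conj i1 i2 m
    rw [← ht] at hd
    rw [hm, ← mul_assoc] at zr1
    change S.r 1 * t^m * S.r 1 = t^m * S.r 1 * S.r 1 at zr1
    rw [hd] at zr1
    have h1 := mul_right_cancel (mul_right_cancel zr1)
    rw [← htp _ Φ, two_mul, zpow_add]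
    nth_rw 1 [← h1]
    rw [← zpow_add, neg_add_cancel]; rfl
  have hz1 : z ≠ S.r 1 := by
    intro h
    have h1 := z_r1 (S.inv 0 i0) (S.inv 1 i1) b01 h
    apply S.r_notMem (i := 0) (j := 1) i2 (by omega) (by omega)
    rw [h1]
    exact r_mem _ le_rfl (by omega)
  have hm0 : ¬ ((S.V 1 3 : ℕ) : ℤ) ∣ m := by
    intro h
    rw [htp1 m h, one_mul] at hm
    exact hz1 hm
  constructor
  · intro hp
    rw [hp] at h2m hm0 htp1
    have h1 : t^m = t^2 := by
      have h3 := htp1 (m-2) (by push_cast at *; omega)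
      rw [zpow_sub, mul_inv_eq_one] at h3
      exact_mod_cast h3
    rw [h1] at hm
    have ht4 : t^4 = 1 := by
      have := htp1 4 dvd_rfl
      exact_mod_cast this
    have h2 := z_four (S.inv 0 i0) (S.inv 1 i1) (S.inv 2 i2) b01 c02 ht4 hm
    apply S.r_notMem (i := 0) (j := 1) i2 (by omega) (by omega)
    rw [h2]
    exact r_mem _ le_rfl (by omega)
  · intro hp
    rw [hp] at h2m hm0 htp1
    set s := S.r 3 with hs
    have ss : s * s = 1 := S.inv 3 i3
    have sinv : s⁻¹ = s := S.r_inv i3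
    have hsD : s ∉ S.G 1 3 := S.r_notMem i3 (by omega) (by omega)
    have mr1 : S.r 1 ∈ S.G 1 3 := r_mem _ (by omega) (by omega)
    have mr2 : S.r 2 ∈ S.G 1 3 := r_mem _ (by omega) (by omega)
    have mt : t ∈ S.G 1 3 := Subgroup.mul_mem _ mr1 mr2
    have z3 : z = t^(3:ℤ) * S.r 1 := by
      have h3 := htp1 (m-3) (by push_cast at *; omega)
      rw [zpow_sub, mul_inv_eq_one] at h3
      rw [← h3]; exact hm
    have zs : z * s * z = s * z * s := by
      have h1 := braid_conj (w := S.r 0 * S.r 1) b23 (by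
        rw [mul_assoc, c13, ← mul_assoc, c03, mul_assoc])
      have h2 : S.r 0 * S.r 1 * S.r 2 * (S.r 0 * S.r 1)⁻¹ = z := by
        rw [mul_inv_rev, S.r_inv i0, S.r_inv i1, hz]
        simp only [mul_assoc]
      rwa [h2] at h1
    have inv1 : ∀ k : ℤ, s * t^k * s ∈ S.G 1 3 → s * t^(-k) * s ∈ S.G 1 3 := by
      intro k hk
      have : s * t^(-k) * s = (s * t^k * s)⁻¹ := by
        rw [mul_inv_rev, mul_inv_rev, sinv, zpow_neg, mul_assoc]
      rw [this]
      exact Subgroup.inv_mem _ hk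
    have add1 : ∀ k l : ℤ, s * t^k * s ∈ S.G 1 3 → s * t^l * s ∈ S.G 1 3 →
        s * t^(k+l) * s ∈ S.G 1 3 := by
      intro k l hk hl
      have : s * t^(k+l) * s = (s * t^k * s) * (s * t^l * s) := by
        calc _ = s * t^k * t^l * s := by rw [zpow_add]; simp only [mul_assoc]
          _ = s * t^k * (s * s) * t^l * s := by rw [ss, mul_one]
          _ = _ := by simp only [mul_assoc]
      rw [this]
      exact Subgroup.mul_mem _ hk hl
    have no3 : s * t^(3:ℤ) * s ∉ S.G 1 3 := by
      intro h
      have h1 : s * z * s ∈ S.G 1 3 := by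
        have : s * z * s = (s * t^(3:ℤ) * s) * S.r 1 := by
          rw [z3, mul_assoc, mul_assoc, c13, ← mul_assoc, ← mul_assoc]
        rw [this]
        exact Subgroup.mul_mem _ h mr1
      rw [← zs] at h1
      have h2 : s = z⁻¹ * (z * s * z) * z⁻¹ := by group
      apply hsD
      rw [h2]
      exact Subgroup.mul_mem _ (Subgroup.mul_mem _ (Subgroup.inv_mem _ zD) h1)
        (Subgroup.inv_mem _ zD)
    have no2 : s * t^(2:ℤ) * s ∉ S.G 1 3 := by
      intro h
      have h2 := inv1 _ h
      have cl : ∀ g ∈ S.G 1 4, ∃ d ∈ S.G 1 3, g = d ∨ g = d * s ∨ g = d * s * S.r 2 := by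
        refine S.G_induct_right (by omega) ⟨1, Subgroup.one_mem _, Or.inl rfl⟩ ?_
        rintro k hk1 hk2 g - ⟨d, hd, h⟩
        have hk : k = 1 ∨ k = 2 ∨ k = 3 := by omega
        rcases hk with rfl | rfl | rfl
        · rcases h with rfl | rfl | rfl
          · exact ⟨g * S.r 1, Subgroup.mul_mem _ hd mr1, Or.inl rfl⟩
          · refine ⟨d * S.r 1, Subgroup.mul_mem _ hd mr1, Or.inr (Or.inl ?_)⟩
            rw [mul_assoc, mul_assoc, c13]
          · refine ⟨d * (s * t^(-2:ℤ) * s) * S.r 1, Subgroup.mul_mem _ (Subgroup.mul_mem _ hd h2)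
              mr1, Or.inr (Or.inr ?_)⟩
            have e : S.r 2 * S.r 1 = t^(-2:ℤ) * t := by
              have : S.r 2 * S.r 1 = t⁻¹ := by rw [ht, mul_inv_rev, S.r_inv i1, S.r_inv i2]
              rw [this]; group
            calc d * s * S.r 2 * S.r 1 = d * s * (S.r 2 * S.r 1) := by rw [mul_assoc]
              _ = d * s * t^(-2:ℤ) * (s * s) * S.r 1 * S.r 2 := by
                rw [e, ss, ht]; simp only [mul_assoc, mul_one]
              _ = d * s * t^(-2:ℤ) * s * (S.r 1 * s) * S.r 2 := by
                rw [c13]; simp only [mul_assoc]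
              _ = _ := by simp only [mul_assoc]
        · rcases h with rfl | rfl | rfl
          · exact ⟨g * S.r 2, Subgroup.mul_mem _ hd mr2, Or.inl rfl⟩
          · exact ⟨d, hd, Or.inr (Or.inr rfl)⟩
          · refine ⟨d, hd, Or.inr (Or.inl ?_)⟩
            rw [mul_assoc, S.inv 2 i2, mul_one]
        · rw [← hs]
          rcases h with rfl | rfl | rfl
          · exact ⟨g, hd, Or.inr (Or.inl rfl)⟩
          · exact ⟨d, hd, Or.inl (by rw [mul_assoc, ss, mul_one])⟩
          · refine ⟨d * S.r 2, Subgroup.mul_mem _ hd mr2, Or.inr (Or.inr ?_)⟩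
            calc d * s * S.r 2 * s = d * (s * S.r 2 * s) := by simp only [mul_assoc]
              _ = _ := by rw [← b23]; simp only [mul_assoc]
      have hF3 : S.F 1 4 ≤ 3 := by
        rw [← S.F_card (i := 1) (j := 4) (by omega) Φ]
        have hsub : S.orb 1 (4-1) '' S.orb 1 4 Φ ⊆
            {S.orb 1 3 Φ, S.orb 1 3 (s Φ), S.orb 1 3 (s (S.r 2 Φ))} := by
          rintro _ ⟨_, ⟨g, hg, rfl⟩, rfl⟩
          obtain ⟨d, hd, rfl | rfl | rfl⟩ := cl g hg
          · left; exact (S.orb_eq_iff.2 ⟨_, hd, rfl⟩).symm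
          · right; left; exact (S.orb_eq_iff.2 ⟨_, hd, rfl⟩).symm
          · right; right; exact (S.orb_eq_iff.2 ⟨_, hd, rfl⟩).symm
        refine (Set.ncard_le_ncard hsub (Set.toFinite _)).trans ?_
        refine (Set.ncard_insert_le _ _).trans ?_
        have := Set.ncard_insert_le (S.orb 1 3 (s Φ)) {S.orb 1 3 (s (S.r 2 Φ))}
        rw [Set.ncard_singleton] at this
        omega
      omega
    have no : ∀ k : ℤ, 0 < k → k < 6 → s * t^k * s ∉ S.G 1 3 := by
      intro k hk1 hk2 h
      have per : ∀ l l' : ℤ, (6:ℤ) ∣ l - l' → t^l = t^l' := by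
        intro l l' hl
        have h3 := htp1 (l-l') (by exact_mod_cast hl)
        rwa [zpow_sub, mul_inv_eq_one] at h3
      have hk : k = 1 ∨ k = 2 ∨ k = 3 ∨ k = 4 ∨ k = 5 := by omega
      rcases hk with rfl | rfl | rfl | rfl | rfl
      · have h7 := add1 1 1 h h
        rw [show (1:ℤ) + 1 = 2 by norm_num] at h7
        exact no2 h7
      · exact no2 h
      · exact no3 h
      · have := inv1 _ h
        rw [per (-4) 2 (by norm_num)] at this
        exact no2 this
      · have := inv1 _ h
        rw [per (-5) 1 (by norm_num)] at this
        have h7 := add1 1 1 this this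
        rw [show (1:ℤ) + 1 = 2 by norm_num] at h7
        exact no2 h7
    rw [← S.F_card (i := 1) (j := 4) (by omega) Φ]
    have mtk : ∀ k : ℤ, s * t^k ∈ S.G 1 4 := fun k => Subgroup.mul_mem _ (r_mem _ (by omega)
      (by omega)) (GG_mono _ le_rfl (by omega) (Subgroup.zpow_mem _ mt k))
    have key : ∀ k l : ℕ, l < k → k < 6 →
        S.orb 1 3 ((s * t^(k:ℤ)) Φ) ≠ S.orb 1 3 ((s * t^(l:ℤ)) Φ) := by
      intro k l h1 h2 h
      obtain ⟨d, hd, hdx⟩ := S.orb_eq_iff.1 h.symm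
      rw [← Perm.mul_apply] at hdx
      have h3 := S.eq_of_reg reg (Subgroup.mul_mem _ (GG_mono _ (by omega) (by omega) hd)
        (GG_mono _ (by omega) (by omega) (mtk _))) (GG_mono _ (by omega) (by omega) (mtk _)) hdx
      apply no ((k:ℤ) - l) (by omega) (by omega)
      have h4 : s * t^((k:ℤ)-l) * s = d := by
        have : d = (s * t^(k:ℤ)) * (s * t^(l:ℤ))⁻¹ := by rw [← h3]; group
        rw [this, mul_inv_rev, sinv, zpow_sub]
        simp only [mul_assoc]
      rw [h4]; exact hd
    have h4 : ((fun k : ℕ => S.orb 1 3 ((s * t^(k:ℤ)) Φ)) '' (Finset.range 6 : Set ℕ)).ncard = 6 := by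
      rw [Set.InjOn.ncard_image, Set.ncard_coe_finset, Finset.card_range]
      intro k hk l hl h
      simp only [Finset.coe_range, Set.mem_Iio] at hk hl
      rcases lt_trichotomy k l with h5 | h5 | h5
      · exact absurd h.symm (key l k h5 (by omega))
      · exact h5
      · exact absurd h (key k l h5 (by omega))
    rw [← h4]
    apply Set.ncard_le_ncard _ (Set.toFinite _)
    rintro _ ⟨k, hk, rfl⟩
    exact ⟨_, ⟨_, mtk k, rfl⟩, rfl⟩

end FlagSys
end ChiralAux

set_option linter.unusedSectionVars false

namespace ChiralAux
open Equiv
variable {X : Type}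
namespace FlagSys
variable {n : ℕ} (S : FlagSys n X) [Finite X]

theorem F_mono' {i j k : ℕ} (h : k ≤ i) (hij : i < j) (hj : j ≤ n) : S.F i j ≤ S.F k j := by
  obtain ⟨d, rfl⟩ := Nat.exists_eq_add_of_le h
  induction d with
  | zero => exact le_rfl
  | succ d ih =>
    have h1 := S.F_mono (i := k+d) (j := j) (by omega) hj
    exact h1.trans (ih (by omega) (by omega))

theorem R1_up (hn : 6 ≤ n) (hα : S.V 0 (n-1) = 3) (h24 : S.V 2 4 = 3) {e j : ℕ} (hj : 4 ≤ j)
    (hje : j ≤ e) (he : e ≤ n) (hNF : S.NF 1 e) : 3 * j.factorial ≤ S.N 1 j := by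
  induction j, hj using Nat.le_induction with
  | base =>
    have := S.R1 hn hα h24 (S.NF_mono hNF le_rfl hje)
    simpa [Nat.factorial] using this
  | succ j hj ih =>
    have h1 := ih (by omega)
    have h2 := S.F_ge hNF he (i := 1) (j := j+1) le_rfl (by omega) hje
    rw [S.N_eq_F (by omega), Nat.add_sub_cancel, Nat.factorial_succ]
    calc 3 * ((j+1) * j.factorial) = (j+1) * (3 * j.factorial) := by ring
      _ ≤ _ := Nat.mul_le_mul (by omega) h1

theorem side {m : ℕ} (hm : 6 ≤ m) (hn : n = m + 2) (hNF : S.NF 1 m) :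
    5 * m ≤ S.V 0 (m+1) * S.V 1 m ∧ (S.T3 2 m → 7 * m ≤ S.V 0 (m+1) * S.V 1 m) := by
  subst hn
  have hα : 3 ≤ S.V 0 (m+1) :=
    (S.p1_ge (by omega)).trans (S.V_mono' (by omega) (by omega))
  have hVK := S.V_ge hNF (by omega) (i := 1) (j := m) le_rfl (by omega) le_rfl
  have h3 : S.V 0 (m+1) = 3 → 2 * (m-1) ≤ S.V 1 m := fun h =>
    S.VK_alpha3 (by omega) le_rfl (by omega) (by omega) (by omega) h hNF
  have h4 : S.V 0 (m+1) ≤ 4 → 2 * (m-1) ≤ S.V 1 m + 1 := fun h =>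
    (S.VK_alpha4 (by omega) le_rfl (by omega) (by omega) (by omega) h hNF).1
  constructor
  · by_cases ha : S.V 0 (m+1) = 3
    · have := h3 ha
      rw [ha]; omega
    by_cases hb : S.V 0 (m+1) = 4
    · have := h4 (by omega)
      rw [hb]; omega
    · exact Nat.mul_le_mul (by omega) (by omega)
  · intro hT
    by_cases hK : S.T3 1 m
    · have := S.run (b := m+1) (j := m) (by omega) (by omega) (by omega) hK
      exact Nat.mul_le_mul (by omega) (by omega)
    · have hC := S.T3_N hT (by omega) (by omega)
      have hKV := S.N_eq_V (i := 1) (j := m) (by omega)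
      rw [show m - 2 + 1 = m - 1 by omega] at hC
      have hfac : m.factorial = m * (m-1).factorial := by
        conv_lhs => rw [show m = (m-1) + 1 by omega, Nat.factorial_succ, Nat.sub_add_cancel (by omega)]
      have hpos := Nat.factorial_pos (m-1)
      have key : ∀ q, q * m.factorial ≤ S.N 1 m → q * m ≤ S.V 1 m := by
        intro q hq
        rw [hKV, hfac, ← mul_assoc] at hq
        exact Nat.le_of_mul_le_mul_right (hq.trans (Nat.mul_le_mul_left _ hC)) hpos
      by_cases ha : S.V 0 (m+1) = 3
      · have h24 := hT 2 le_rfl (by omega)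
        have := key 3 (S.R1_up (by omega) ha h24 (by omega) le_rfl (by omega) hNF)
        rw [ha]; omega
      · have := S.count (by omega) (by omega) hNF hK
        rw [show m - 1 + 1 = m by omega] at this
        have := key 2 this
        calc 7 * m ≤ 4 * (2 * m) := by omega
          _ ≤ _ := Nat.mul_le_mul (by omega) this

theorem caseB {m : ℕ} (hm : 6 ≤ m) (hn : n = m + 2) (h : ¬ S.Reg 1 (m+1)) :
    48 * m * m.factorial ≤ S.N 0 n := by
  have hK : S.NF 1 m := by
    apply S.NF_of (by omega)
    intro hf
    exact h (S.theoremA (by omega) (by omega) (S.reg_low (by omega)) (S.reg_high (by omega) (by omega))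
      (by rwa [Nat.add_sub_cancel]))
  have hL : S.NF 2 (m+1) := by
    apply S.NF_of (by omega)
    intro hf
    exact h (S.theoremA' (by omega) (by omega) (S.reg_low (by omega)) (S.reg_high (by omega) (by omega))
      hf)
  have s1 := S.side hm hn hK
  have s2 := S.dual.side hm hn (S.dual_NF (by omega) (by omega) hL)
  rw [S.dual_V (i := 1) (j := n) (by omega) (by omega) (by omega),
    S.dual_V (i := 2) (j := m+1) (by omega) (by omega) (by omega),
    S.dual_T3 (i := 2) (j := m) (by omega) (by omega)] at s2
  have e1 := S.N_eq_F (i := 0) (j := n) le_rfl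
  have e2 := S.N_eq_V (i := 0) (j := m+1) (by omega)
  have e3 := S.N_eq_V (i := 1) (j := m+1) (by omega)
  have e4 := S.N_eq_F (i := 2) (j := m+1) (by omega)
  rw [show n - 1 = m + 1 by omega] at e1
  rw [Nat.add_sub_cancel] at e4
  have l1 := S.F_mono (i := 0) (j := n) (by omega) le_rfl
  have l2 := S.V_mono (i := 1) (j := m) (by omega)
  have hC := S.N_ge hK (by omega) (i := 2) (j := m) (by omega) (by omega) le_rfl
  have hC2 : ¬ S.T3 2 m → _ := fun hT => S.count (i := 2) (j := m) (by omega) (by omega)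
    (S.NF_mono hK (by omega) le_rfl) hT
  rw [show m - 2 + 1 = m - 1 by omega] at hC hC2
  have hfac : m.factorial = m * (m-1).factorial := by
    conv_lhs => rw [show m = (m-1) + 1 by omega, Nat.factorial_succ, Nat.sub_add_cancel (by omega)]
  have main : (S.V 0 (m+1) * S.V 1 m) * (S.F 1 n * S.F 2 (m+1)) * S.N 2 m ≤ S.N 0 n := by
    rw [e1, e2, e3]
    simp only [zero_add, Nat.reduceAdd] at *
    rw [e4]
    calc _ = S.F 1 n * (S.V 0 (m+1) * (S.V 1 m * (S.F 2 (m+1) * S.N 2 m))) := by ring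
      _ ≤ _ := Nat.mul_le_mul l1 (Nat.mul_le_mul_left _ (Nat.mul_le_mul_right _ l2))
  refine le_trans ?_ main
  rw [hfac]
  by_cases hT : S.T3 2 m
  · calc 48 * m * (m * (m-1).factorial) = 48 * (m * m * (m-1).factorial) := by ring
      _ ≤ 49 * (m * m * (m-1).factorial) := by omega
      _ = (7 * m) * (7 * m) * (m-1).factorial := by ring
      _ ≤ _ := Nat.mul_le_mul (Nat.mul_le_mul (s1.2 hT) (s2.2 hT)) hC
  · calc 48 * m * (m * (m-1).factorial) = 48 * (m * m * (m-1).factorial) := by ring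
      _ ≤ 50 * (m * m * (m-1).factorial) := by omega
      _ = (5 * m) * (5 * m) * (2 * (m-1).factorial) := by ring
      _ ≤ _ := Nat.mul_le_mul (Nat.mul_le_mul s1.1 s2.1) (hC2 hT)

theorem caseA {m : ℕ} (hm : 6 ≤ m) (hn : n = m + 2) (h : ¬ S.Reg 0 (m+1)) (h' : S.Reg 1 (m+1)) :
    48 * m * m.factorial ≤ S.N 0 n := by
  have hK : S.NF 0 m := by
    apply S.NF_of (by omega)
    intro hf
    exact h (S.theoremA (by omega) (by omega) (S.reg_low (by omega)) h'
      (by rwa [Nat.add_sub_cancel]))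
  have hL : S.NF 1 (m+1) := by
    apply S.NF_of (by omega)
    intro hf
    exact h (S.theoremA' (by omega) (by omega) (S.reg_low (by omega)) h' hf)
  have e1 := S.N_eq_F (i := 0) (j := n) le_rfl
  have e2 := S.N_eq_V (i := 0) (j := m+1) (by omega)
  have e3 := S.N_eq_F (i := 0) (j := m+1) (by omega)
  rw [show n - 1 = m + 1 by omega] at e1
  rw [Nat.add_sub_cancel] at e3
  have hV : m + 1 ≤ S.V 0 (m+1) := by
    have := S.V_mono (i := 0) (j := m) (by omega)
    have := S.V_ge hK (by omega) (i := 0) (j := m) le_rfl (by omega) le_rfl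
    omega
  have hF : m + 1 ≤ S.F 0 (m+1) := by
    have := S.F_mono (i := 0) (j := m+1) (by omega) (by omega)
    have := S.F_ge hL (by omega) (i := 1) (j := m+1) le_rfl (by omega) le_rfl
    simp only [zero_add] at *
    omega
  have hfac : (m+1).factorial = (m+1) * m.factorial := Nat.factorial_succ m
  by_cases hT : S.T3 0 (m+1)
  · have hr := S.dual.run (b := n) (j := n) (by omega) le_rfl le_rfl
      ((S.dual_T3 (i := 0) (j := m+1) (by omega) (by omega)).2 hT)
    rw [S.dual_V (i := 0) (j := n) (by omega) (by omega) (by omega)] at hr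
    have hLN := S.N_ge hL (by omega) (i := 1) (j := m+1) le_rfl (by omega) le_rfl
    rw [show m + 1 - 1 + 1 = m + 1 by omega] at hLN
    rw [e1, e2, zero_add]
    calc 48 * m * m.factorial ≤ ((m+3) * (m+1) * (m+1)) * m.factorial := by
          apply Nat.mul_le_mul_right
          have h63 : 63 ≤ (m+3) * (m+1) := Nat.mul_le_mul (show 9 ≤ m+3 by omega) (show 7 ≤ m+1 by omega)
          have := Nat.mul_le_mul h63 (le_refl (m+1))
          omega
      _ = (n+1) * ((m+1) * (m+1).factorial) := by rw [hfac, hn]; ring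
      _ ≤ _ := Nat.mul_le_mul hr (Nat.mul_le_mul hV hLN)
  · have hF3 : 3 ≤ S.F 0 n := (S.pl_ge (by omega)).trans (S.F_mono' (by omega) (by omega) le_rfl)
    have hM : (m+1) * (2 * (m+1).factorial) ≤ S.N 0 (m+1) := by
      by_cases hT2 : S.T3 0 m
      · have hT3 : ¬ S.T3 1 (m+1) := by
          intro h3
          apply hT
          intro k _ hk2
          by_cases hk : k = 0
          · exact hT2 k (by omega) (by omega)
          · exact h3 k (by omega) (by omega)
        have := S.count (by omega) (by omega) hL hT3
        rw [show m + 1 - 1 + 1 = m + 1 by omega] at this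
        rw [e2, zero_add]
        exact Nat.mul_le_mul hV this
      · have := S.count (by omega) (by omega) hK hT2
        rw [show m - 0 + 1 = m + 1 by omega] at this
        rw [e3]
        exact Nat.mul_le_mul hF this
    rw [e1]
    calc 48 * m * m.factorial ≤ (6 * (m+1) * (m+1)) * m.factorial := by
          apply Nat.mul_le_mul_right; nlinarith
      _ = 3 * ((m+1) * (2 * (m+1).factorial)) := by rw [hfac]; ring
      _ ≤ _ := Nat.mul_le_mul hF3 hM

theorem caseN {m : ℕ} (hm : 6 ≤ m) (hn : n = m + 2) (h : S.Reg 0 (m+1)) (h' : S.Reg 1 n) :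
    48 * m * m.factorial ≤ S.N 0 n := by
  have h0 := S.not_reg (by omega)
  have hK : S.NF 0 (m+1) := by
    apply S.NF_of (by omega)
    intro hf
    exact h0 (S.theoremA (by omega) le_rfl (by rwa [show n - 1 = m + 1 by omega]) h'
      (by rwa [show n - 1 = m + 1 by omega]))
  have hL : S.NF 1 n := by
    apply S.NF_of (by omega)
    intro hf
    exact h0 (S.theoremA' (by omega) le_rfl (by rwa [show n - 1 = m + 1 by omega]) h' hf)
  have e2 := S.N_eq_V (i := 0) (j := n) le_rfl
  have hV : m + 2 ≤ S.V 0 n := by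
    have := S.V_mono' (i := 0) (j := m+1) (k := n) (by omega) (by omega)
    have := S.V_ge hK (by omega) (i := 0) (j := m+1) le_rfl (by omega) le_rfl
    omega
  have hLN := S.N_ge hL (by omega) (i := 1) (j := n) le_rfl (by omega) le_rfl
  rw [show n - 1 + 1 = m + 1 + 1 by omega, Nat.factorial_succ, Nat.factorial_succ] at hLN
  rw [e2, zero_add]
  calc 48 * m * m.factorial ≤ ((m+2) * (m+1+1) * (m+1)) * m.factorial := by
        apply Nat.mul_le_mul_right
        have h64 : 64 ≤ (m+2) * (m+1+1) := Nat.mul_le_mul (show 8 ≤ m+2 by omega) (show 8 ≤ m+1+1 by omega)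
        have := Nat.mul_le_mul h64 (le_refl (m+1))
        omega
    _ = (m+2) * ((m+1+1) * ((m+1) * m.factorial)) := by ring
    _ ≤ _ := Nat.mul_le_mul hV hLN

theorem bound (hn : 8 ≤ n) : 48 * (n-2) * (n-2).factorial ≤ S.N 0 n := by
  obtain ⟨m, hm⟩ : ∃ m, n = m + 2 := ⟨n-2, by omega⟩
  rw [show n - 2 = m by omega]
  by_cases h1 : S.Reg 1 (m+1)
  · by_cases h2 : S.Reg 0 (m+1)
    · by_cases h3 : S.Reg 1 n
      · exact S.caseN (by omega) hm h2 h3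
      · rw [← S.dual_N (a := 0) (b := n) (by omega) (by omega)]
        apply S.dual.caseA (by omega) hm
        · rwa [S.dual_reg (i := 1) (j := n) (by omega) (by omega)]
        · rwa [S.dual_reg (i := 1) (j := m+1) (by omega) (by omega)]
    · exact S.caseA (by omega) hm h2 h1
  · exact S.caseB (by omega) hm h1

end FlagSys
end ChiralAux

set_option linter.unusedSectionVars false

namespace ChiralAux
open Equiv
namespace Bridge
variable {n : ℕ} (P : AbstractPolytope n)

theorem rank_ge (F : P.Face) : -1 ≤ P.rank F := by
  rcases (P.bot_le F).eq_or_lt with h | h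
  · rw [← h, P.rank_bot]
  · have := P.rank_strictMono _ _ h
    rw [P.rank_bot] at this; omega

theorem rank_le (F : P.Face) : P.rank F ≤ n := by
  rcases (P.le_top F).eq_or_lt with h | h
  · rw [h, P.rank_top]
  · have := P.rank_strictMono _ _ h
    rw [P.rank_top] at this; omega

/-- the face of rank `j` of a flag -/
noncomputable def fc (Φ : Flag P.Face) (j : ℤ) : P.Face :=
  if h : -1 ≤ j ∧ j ≤ (n : ℤ) then Classical.choose (P.flag_ranks Φ j h.1 h.2) else P.bot

variable {P}

theorem fc_mem (Φ : Flag P.Face) {j : ℤ} (h1 : -1 ≤ j) (h2 : j ≤ n) : fc P Φ j ∈ Φ := by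
  rw [fc, dif_pos ⟨h1, h2⟩]
  exact (Classical.choose_spec (P.flag_ranks Φ j h1 h2)).1

theorem fc_rank (Φ : Flag P.Face) {j : ℤ} (h1 : -1 ≤ j) (h2 : j ≤ n) :
    P.rank (fc P Φ j) = j := by
  rw [fc, dif_pos ⟨h1, h2⟩]
  exact (Classical.choose_spec (P.flag_ranks Φ j h1 h2)).2

theorem eq_of_rank (Φ : Flag P.Face) {F G : P.Face} (hF : F ∈ Φ) (hG : G ∈ Φ)
    (h : P.rank F = P.rank G) : F = G := by
  rcases Φ.le_or_le hF hG with h1 | h1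
  · rcases h1.eq_or_lt with h2 | h2
    · exact h2
    · have := P.rank_strictMono _ _ h2; omega
  · rcases h1.eq_or_lt with h2 | h2
    · exact h2.symm
    · have := P.rank_strictMono _ _ h2; omega

theorem fc_eq {Φ : Flag P.Face} {F : P.Face} (hF : F ∈ Φ) : fc P Φ (P.rank F) = F :=
  eq_of_rank Φ (fc_mem Φ (rank_ge P F) (rank_le P F)) hF (fc_rank Φ (rank_ge P F) (rank_le P F))

theorem fc_eq' {Φ : Flag P.Face} {F : P.Face} (hF : F ∈ Φ) {j : ℤ} (h : P.rank F = j) :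
    fc P Φ j = F := by
  subst h; exact fc_eq hF

theorem fc_lt (Φ : Flag P.Face) {i j : ℤ} (h1 : -1 ≤ i) (h2 : i < j) (h3 : j ≤ n) :
    fc P Φ i < fc P Φ j := by
  have hi := fc_rank Φ h1 (by omega : i ≤ n)
  have hj := fc_rank Φ (by omega : -1 ≤ j) h3
  rcases Φ.le_or_le (fc_mem Φ h1 (by omega : i ≤ n)) (fc_mem Φ (by omega : -1 ≤ j) h3) with h | h
  · rcases h.eq_or_lt with h' | h'
    · rw [h'] at hi; omega
    · exact h'
  · rcases h.eq_or_lt with h' | h'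
    · rw [h'] at hj; omega
    · have := P.rank_strictMono _ _ h'; omega

theorem fc_le (Φ : Flag P.Face) {i j : ℤ} (h1 : -1 ≤ i) (h2 : i ≤ j) (h3 : j ≤ n) :
    fc P Φ i ≤ fc P Φ j := by
  rcases h2.eq_or_lt with rfl | h
  · exact le_rfl
  · exact (fc_lt Φ h1 h h3).le

theorem bot_mem (Φ : Flag P.Face) : P.bot ∈ Φ :=
  Flag.mem_iff_forall_le_or_ge.2 fun b _ => Or.inl (P.bot_le b)

theorem top_mem (Φ : Flag P.Face) : P.top ∈ Φ :=
  Flag.mem_iff_forall_le_or_ge.2 fun b _ => Or.inr (P.le_top b)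

theorem fc_bot (Φ : Flag P.Face) : fc P Φ (-1) = P.bot := fc_eq' (bot_mem Φ) P.rank_bot

theorem fc_top (Φ : Flag P.Face) : fc P Φ n = P.top := fc_eq' (top_mem Φ) P.rank_top

theorem mem_iff (Φ : Flag P.Face) (F : P.Face) : F ∈ Φ ↔ fc P Φ (P.rank F) = F :=
  ⟨fc_eq, fun h => h ▸ fc_mem Φ (rank_ge P F) (rank_le P F)⟩

/-- agreement outside `[i, j)` -/
def Agr (i j : ℤ) (Φ Ψ : Flag P.Face) : Prop :=
  ∀ k : ℤ, -1 ≤ k → k ≤ n → (k < i ∨ j ≤ k) → fc P Φ k = fc P Ψ k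

theorem Agr.symm {i j : ℤ} {Φ Ψ : Flag P.Face} (h : Agr i j Φ Ψ) : Agr i j Ψ Φ :=
  fun k a b c => (h k a b c).symm

theorem Agr.trans {i j : ℤ} {Φ Ψ Θ : Flag P.Face} (h : Agr i j Φ Ψ) (h' : Agr i j Ψ Θ) :
    Agr i j Φ Θ :=
  fun k a b c => (h k a b c).trans (h' k a b c)

theorem Agr.rfl' {i j : ℤ} {Φ : Flag P.Face} : Agr i j Φ Φ := fun _ _ _ _ => rfl

theorem Agr.eq {i j : ℤ} {Φ Ψ : Flag P.Face} (h : Agr i j Φ Ψ) (hij : j ≤ i) : Φ = Ψ := by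
  apply Flag.ext
  ext F
  show F ∈ Φ ↔ F ∈ Ψ
  rw [mem_iff, mem_iff, h _ (rank_ge P F) (rank_le P F) (by omega)]

/-- lower part of `Ψ`, upper part of `Φ` -/
theorem exists_mix (Φ Ψ : Flag P.Face) {k : ℤ} (h1 : -1 ≤ k) (h2 : k ≤ n)
    (h : fc P Φ k = fc P Ψ k) :
    ∃ Θ : Flag P.Face, (∀ m, -1 ≤ m → m ≤ k → fc P Θ m = fc P Ψ m) ∧
      (∀ m, k ≤ m → m ≤ n → fc P Θ m = fc P Φ m) := by
  have hc : IsChain (· ≤ ·) ({x | x ∈ Ψ ∧ x ≤ fc P Φ k} ∪ {x | x ∈ Φ ∧ fc P Φ k ≤ x}) := by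
    rintro x hx y hy -
    rcases hx with ⟨hx, hx'⟩ | ⟨hx, hx'⟩ <;> rcases hy with ⟨hy, hy'⟩ | ⟨hy, hy'⟩
    · exact Ψ.le_or_le hx hy
    · exact Or.inl (hx'.trans hy')
    · exact Or.inr (hy'.trans hx')
    · exact Φ.le_or_le hx hy
  obtain ⟨Θ, hΘ⟩ := hc.exists_subset_flag
  refine ⟨Θ, fun m hm hm' => ?_, fun m hm hm' => ?_⟩
  · refine fc_eq' (hΘ (Or.inl ⟨fc_mem Ψ hm (by omega), ?_⟩)) (fc_rank Ψ hm (by omega))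
    rw [h]; exact fc_le Ψ hm hm' h2
  · exact fc_eq' (hΘ (Or.inr ⟨fc_mem Φ (by omega) hm', fc_le Φ h1 hm hm'⟩))
      (fc_rank Φ (by omega) (by omega))

/-- a flag through two comparable faces agreeing with a given one outside an interval -/
theorem exists_through (Φ : Flag P.Face) {i j : ℤ} (hi : 0 ≤ i) (hij : i ≤ j) (hj : j ≤ n)
    {A B : P.Face} (hA : fc P Φ (i-1) < A) (hA' : A < fc P Φ j)
    (hB : fc P Φ (i-1) < B) (hB' : B < fc P Φ j) (hAB : A ≤ B ∨ B ≤ A) :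
    ∃ Ψ : Flag P.Face, Agr i j Φ Ψ ∧ A ∈ Ψ ∧ B ∈ Ψ := by
  have hc0 : IsChain (· ≤ ·) {x | x ∈ Φ ∧ (x ≤ fc P Φ (i-1) ∨ fc P Φ j ≤ x)} := by
    rintro x hx y hy -
    exact Φ.le_or_le hx.1 hy.1
  have hc1 := hc0.insert (a := B) (by
    rintro b ⟨_, hb | hb⟩ _
    · exact Or.inr (hb.trans hB.le)
    · exact Or.inl (hB'.le.trans hb))
  have hc2 := hc1.insert (a := A) (by
    rintro b (rfl | ⟨_, hb | hb⟩) _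
    · exact hAB
    · exact Or.inr (hb.trans hA.le)
    · exact Or.inl (hA'.le.trans hb))
  obtain ⟨Ψ, hΨ⟩ := hc2.exists_subset_flag
  refine ⟨Ψ, fun k h1 h2 h3 => ?_, hΨ (by simp), hΨ (by simp)⟩
  symm
  refine fc_eq' (hΨ (Or.inr (Or.inr ⟨fc_mem Φ h1 h2, ?_⟩))) (fc_rank Φ h1 h2)
  rcases h3 with h3 | h3
  · exact Or.inl (fc_le Φ h1 (by omega) (by omega))
  · exact Or.inr (fc_le Φ (by omega) h3 h2)

theorem exists_adj (Φ : Flag P.Face) {i : ℕ} (hi : i < n) :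
    ∃ Ψ : Flag P.Face, Ψ ≠ Φ ∧ Agr i (i+1) Φ Ψ ∧
      ∀ Θ : Flag P.Face, Agr i (i+1) Φ Θ → Θ = Φ ∨ Θ = Ψ := by
  set F := fc P Φ ((i:ℤ)-1) with hF
  set G := fc P Φ ((i:ℤ)+1) with hG
  have hFG : F < G := fc_lt Φ (by omega) (by omega) (by omega)
  have hr : P.rank G = P.rank F + 2 := by
    rw [hF, hG, fc_rank Φ (by omega) (by omega), fc_rank Φ (by omega) (by omega)]; ring
  have hcard := P.diamond F G hFG hr
  rw [Nat.card_eq_two_iff] at hcard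
  have key : ∀ Θ : Flag P.Face, Agr i (i+1) Φ Θ → F < fc P Θ i ∧ fc P Θ i < G := by
    intro Θ h
    rw [hF, hG, h _ (by omega) (by omega) (by omega), h ((i:ℤ)+1) (by omega) (by omega) (by omega)]
    exact ⟨fc_lt Θ (by omega) (by omega) (by omega), fc_lt Θ (by omega) (by omega) (by omega)⟩
  have hext : ∀ Θ Θ' : Flag P.Face, Agr i (i+1) Φ Θ → Agr i (i+1) Φ Θ' →
      fc P Θ i = fc P Θ' i → Θ = Θ' := by
    intro Θ Θ' h h' he
    refine Agr.eq (i := 0) (j := 0) (fun k a b _ => ?_) le_rfl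
    by_cases hk : k = i
    · rw [hk, he]
    · exact ((h k a b (by omega)).symm).trans (h' k a b (by omega))
  obtain ⟨x, y, hxy, huniv⟩ := hcard
  have hall : ∀ H : P.Face, F < H → H < G → H = x.1 ∨ H = y.1 := by
    intro H h1 h2
    have : (⟨H, h1, h2⟩ : {H : P.Face // F < H ∧ H < G}) ∈ ({x, y} : Set _) := by
      rw [huniv]; trivial
    rcases this with h | h
    · left; exact congrArg Subtype.val h
    · right; exact congrArg Subtype.val h
  have hxy' : x.1 ≠ y.1 := fun h => hxy (Subtype.ext h)
  obtain ⟨H, hH1, hH2, hHne⟩ : ∃ H, F < H ∧ H < G ∧ H ≠ fc P Φ i := by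
    by_cases h : fc P Φ i = x.1
    · exact ⟨y.1, y.2.1, y.2.2, by rw [h]; exact hxy'.symm⟩
    · exact ⟨x.1, x.2.1, x.2.2, fun h' => h h'.symm⟩
  obtain ⟨Ψ, hΨ, hHΨ, -⟩ := exists_through Φ (i := i) (j := (i:ℤ)+1) (by omega) (by omega) (by omega)
    hH1 hH2 hH1 hH2 (Or.inl le_rfl)
  have hHr : fc P Ψ i = H := by
    apply fc_eq' hHΨ
    have a := P.rank_strictMono _ _ hH1
    have b := P.rank_strictMono _ _ hH2
    have c : P.rank F = (i:ℤ) - 1 := fc_rank Φ (by omega) (by omega)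
    omega
  have hne : fc P Ψ i ≠ fc P Φ i := by rw [hHr]; exact hHne
  refine ⟨Ψ, fun h => hne (by rw [h]), hΨ, fun Θ hΘ => ?_⟩
  have k1 := hall _ (key Φ Agr.rfl').1 (key Φ Agr.rfl').2
  have k2 := hall _ (key Ψ hΨ).1 (key Ψ hΨ).2
  have k3 := hall _ (key Θ hΘ).1 (key Θ hΘ).2
  by_cases h : fc P Θ i = fc P Φ i
  · exact Or.inl (hext _ _ hΘ Agr.rfl' h)
  · right
    apply hext _ _ hΘ hΨ
    rcases k1 with k1 | k1 <;> rcases k2 with k2 | k2 <;> rcases k3 with k3 | k3 <;>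
      simp_all

/-- the adjacent flag -/
noncomputable def adj (i : ℕ) (Φ : Flag P.Face) : Flag P.Face :=
  if hi : i < n then Classical.choose (exists_adj Φ hi) else Φ

theorem adj_ne {i : ℕ} (hi : i < n) (Φ : Flag P.Face) : adj i Φ ≠ Φ := by
  rw [adj, dif_pos hi]; exact (Classical.choose_spec (exists_adj Φ hi)).1

theorem adj_agr (i : ℕ) (Φ : Flag P.Face) : Agr i (i+1) Φ (adj i Φ) := by
  by_cases hi : i < n
  · rw [adj, dif_pos hi]; exact (Classical.choose_spec (exists_adj Φ hi)).2.1
  · rw [adj, dif_neg hi]; exact Agr.rfl'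

theorem adj_uniq {i : ℕ} (hi : i < n) {Φ Θ : Flag P.Face} (h : Agr i (i+1) Φ Θ) :
    Θ = Φ ∨ Θ = adj i Φ := by
  rw [adj, dif_pos hi]; exact (Classical.choose_spec (exists_adj Φ hi)).2.2 Θ h

theorem adj_adj (i : ℕ) (Φ : Flag P.Face) : adj i (adj i Φ) = Φ := by
  by_cases hi : i < n
  · rcases adj_uniq hi (adj_agr i Φ).symm with h | h
    · exact absurd h.symm (adj_ne hi Φ)
    · exact h.symm
  · rw [adj, dif_neg hi, adj, dif_neg hi]

variable (P) in
/-- the permutation of flags -/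
noncomputable def rr (i : ℕ) : Perm (Flag P.Face) := ⟨adj i, adj i, adj_adj i, adj_adj i⟩

theorem rr_apply (i : ℕ) (Φ : Flag P.Face) : rr P i Φ = adj i Φ := rfl

theorem adj_fc_ne {i : ℕ} (hi : i < n) (Φ : Flag P.Face) : fc P (adj i Φ) i ≠ fc P Φ i := by
  intro h
  apply adj_ne hi Φ
  refine Agr.eq (i := 0) (j := 0) (fun k a b _ => ?_) le_rfl
  by_cases hk : k = i
  · rw [hk, h]
  · exact ((adj_agr i Φ) k a b (by omega)).symm

theorem adj_comm {i j : ℕ} (hi : i < n) (hj : j < n) (hij : i + 2 ≤ j) (Φ : Flag P.Face) :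
    adj i (adj j Φ) = adj j (adj i Φ) := by
  obtain ⟨Θ, h1, h2⟩ := exists_mix (adj j Φ) (adj i Φ) (k := (i:ℤ)+1) (by omega) (by omega)
    (by rw [← adj_agr j Φ _ (by omega) (by omega) (by omega),
          ← adj_agr i Φ _ (by omega) (by omega) (by omega)])
  have e1 : Θ = adj i (adj j Φ) := by
    have ha : Agr i (i+1) (adj j Φ) Θ := by
      intro k a b c
      rcases c with c | c
      · rw [h1 k a (by omega), ← adj_agr j Φ _ a b (by omega), ← adj_agr i Φ _ a b (by omega)]
      · rw [h2 k c b]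
    rcases adj_uniq hi ha with h | h
    · exfalso
      apply adj_fc_ne hi Φ
      rw [← h1 i (by omega) (by omega), h, ← adj_agr j Φ _ (by omega) (by omega) (by omega)]
    · exact h
  have e2 : Θ = adj j (adj i Φ) := by
    have ha : Agr j (j+1) (adj i Φ) Θ := by
      intro k a b c
      by_cases hk : k ≤ i + 1
      · rw [h1 k a hk]
      · rw [h2 k (by omega) b, ← adj_agr j Φ _ a b (by omega), ← adj_agr i Φ _ a b (by omega)]
    rcases adj_uniq hj ha with h | h
    · exfalso
      apply adj_fc_ne hj Φ
      rw [← h2 j (by omega) (by omega), h, ← adj_agr i Φ _ (by omega) (by omega) (by omega)]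
    · exact h
  rw [← e1, ← e2]

theorem GG_agr {i j : ℕ} {g : Perm (Flag P.Face)} (hg : g ∈ GG (rr P) i j) (Φ : Flag P.Face) :
    Agr i j Φ (g Φ) := by
  induction hg using Subgroup.closure_induction generalizing Φ with
  | mem x hx =>
    obtain ⟨k, h1, h2, rfl⟩ := hx
    intro m a b c
    exact adj_agr k Φ m a b (by omega)
  | one => exact Agr.rfl'
  | mul x y _ _ hx hy => exact (hy Φ).trans (hx (y Φ))
  | inv x _ hx =>
    have := hx (x⁻¹ Φ)
    simpa using this.symm

/-- reachability -/
def Rch (i j : ℕ) (Φ Ψ : Flag P.Face) : Prop := ∃ g ∈ GG (rr P) i j, g Φ = Ψ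

theorem Rch.trans {i j i' j' a b : ℕ} {Φ Ψ Θ : Flag P.Face} (h : Rch i j Φ Ψ)
    (h' : Rch i' j' Ψ Θ) (h1 : a ≤ i) (h2 : a ≤ i') (h3 : j ≤ b) (h4 : j' ≤ b) : Rch a b Φ Θ := by
  obtain ⟨g, hg, rfl⟩ := h
  obtain ⟨g', hg', rfl⟩ := h'
  exact ⟨g' * g, Subgroup.mul_mem _ (GG_mono _ h2 h4 hg') (GG_mono _ h1 h3 hg), rfl⟩

theorem conn (d : ℕ) : ∀ i : ℕ, i + d ≤ n → ∀ Φ Ψ : Flag P.Face, Agr i ((i + d : ℕ) : ℤ) Φ Ψ →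
    Rch i (i+d) Φ Ψ := by
  induction d using Nat.strong_induction_on with
  | _ d ih =>
  intro i hd Φ Ψ hag
  rcases Nat.eq_zero_or_pos d with rfl | hpos
  · exact ⟨1, Subgroup.one_mem _, hag.eq (by omega)⟩
  rcases Nat.lt_or_ge d 2 with h2 | h2
  · obtain rfl : d = 1 := by omega
    rcases adj_uniq (i := i) (by omega) (Φ := Φ) (Θ := Ψ) (by exact_mod_cast hag) with h | h
    · exact ⟨1, Subgroup.one_mem _, h.symm⟩
    · exact ⟨rr P i, r_mem _ le_rfl (by omega), h.symm⟩
  have share : ∀ Φ Ψ : Flag P.Face, Agr i ((i + d : ℕ) : ℤ) Φ Ψ → ∀ k : ℕ, i ≤ k → k < i + d →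
      fc P Φ k = fc P Ψ k → Rch i (i+d) Φ Ψ := by
    intro Φ Ψ hag k h1 h2 hk
    obtain ⟨Θ, t1, t2⟩ := exists_mix Φ Ψ (k := k) (by omega) (by omega) hk
    have r1 := ih (k - i) (by omega) i (by omega) Φ Θ (by
      intro m a b c
      by_cases hm : (k:ℤ) ≤ m
      · rw [t2 m hm b]
      · rw [t1 m a (by omega)]; exact hag m a b (by omega))
    have r2 := ih (i + d - (k+1)) (by omega) (k+1) (by omega) Θ Ψ (by
      intro m a b c
      by_cases hm : m ≤ (k:ℤ)
      · rw [t1 m a hm]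
      · rw [t2 m (by omega) b]; exact hag m a b (by omega))
    exact r1.trans r2 (by omega) (by omega) (by omega) (by omega)
  have hFr : P.rank (fc P Φ ((i:ℤ)-1)) = (i:ℤ)-1 := fc_rank Φ (by omega) (by omega)
  have hGr : P.rank (fc P Φ ((i+d:ℕ):ℤ)) = ((i+d:ℕ):ℤ) := fc_rank Φ (by omega) (by omega)
  have share' : ∀ Φ' Ψ' : Flag P.Face, Agr i ((i + d : ℕ) : ℤ) Φ' Ψ' → ∀ H : P.Face,
      fc P Φ ((i:ℤ)-1) < H → H < fc P Φ ((i+d:ℕ):ℤ) → H ∈ Φ' → H ∈ Ψ' → Rch i (i+d) Φ' Ψ' := by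
    intro Φ' Ψ' ha H h1 h2 h3 h4
    have a := P.rank_strictMono _ _ h1
    have b := P.rank_strictMono _ _ h2
    obtain ⟨k, hk⟩ : ∃ k : ℕ, P.rank H = k := ⟨(P.rank H).toNat, by omega⟩
    refine share Φ' Ψ' ha k (by omega) (by omega) ?_
    rw [fc_eq' h3 hk, fc_eq' h4 hk]
  have hΦi : fc P Φ ((i:ℤ)-1) < fc P Φ i := fc_lt Φ (by omega) (by omega) (by omega)
  have hΦi' : fc P Φ i < fc P Φ ((i+d:ℕ):ℤ) := fc_lt Φ (by omega) (by omega) (by omega)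
  have hΨi : fc P Φ ((i:ℤ)-1) < fc P Ψ i := by
    rw [hag _ (by omega) (by omega) (by omega)]
    exact fc_lt Ψ (by omega) (by omega) (by omega)
  have hΨi' : fc P Ψ i < fc P Φ ((i+d:ℕ):ℤ) := by
    rw [hag ((i+d:ℕ):ℤ) (by omega) (by omega) (by omega)]
    exact fc_lt Ψ (by omega) (by omega) (by omega)
  have hsc := P.strongly_connected _ _ (hΦi.trans hΦi') (by rw [hFr, hGr]; push_cast; omega)
    _ _ hΦi hΦi' hΨi hΨi'
  have main : ∀ H : P.Face, Relation.ReflTransGen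
      (fun A B : P.Face => fc P Φ ((i:ℤ)-1) < A ∧ A < fc P Φ ((i+d:ℕ):ℤ) ∧
        fc P Φ ((i:ℤ)-1) < B ∧ B < fc P Φ ((i+d:ℕ):ℤ) ∧ (A ≤ B ∨ B ≤ A)) (fc P Φ i) H →
      ∀ Θ : Flag P.Face, Agr i ((i + d : ℕ) : ℤ) Φ Θ → H ∈ Θ → Rch i (i+d) Φ Θ := by
    intro H hH
    induction hH with
    | refl =>
      intro Θ ha hm
      exact share' Φ Θ ha _ hΦi hΦi' (fc_mem Φ (by omega) (by omega)) hm
    | tail _ hst ih2 =>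
      intro Θ ha hm
      obtain ⟨q1, q2, q3, q4, q5⟩ := hst
      obtain ⟨Ξ, x1, x2, x3⟩ := exists_through Φ (i := i) (j := ((i+d:ℕ):ℤ)) (by omega) (by omega)
        (by omega) q1 q2 q3 q4 q5
      exact (ih2 Ξ x1 x2).trans (share' Ξ Θ (x1.symm.trans ha) _ q3 q4 x3 hm)
        le_rfl le_rfl le_rfl le_rfl
  exact main _ hsc Ψ hag (fc_mem Ψ (by omega) (by omega))

theorem conn' {i j : ℕ} (hj : j ≤ n) {Φ Ψ : Flag P.Face} (h : Agr i j Φ Ψ) :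
    Rch i j Φ Ψ := by
  rcases Nat.lt_or_ge i j with hij | hij
  · have := conn (j - i) i (by omega) Φ Ψ (by rwa [show i + (j - i) = j by omega])
    rwa [show i + (j - i) = j by omega] at this
  · exact ⟨1, Subgroup.one_mem _, h.eq (by omega)⟩

theorem rank_iso_ge (e : P.Face ≃o P.Face) (F : P.Face) : P.rank F ≤ P.rank (e F) := by
  obtain ⟨Φ, hΦ⟩ := (Set.subsingleton_singleton (a := F)).isChain (r := (· ≤ ·)).exists_subset_flag
  have hF : F ∈ Φ := hΦ rfl
  have key : ∀ k : ℕ, -1 + (k:ℤ) ≤ n → -1 + (k:ℤ) ≤ P.rank (e (fc P Φ (-1 + k))) := by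
    intro k
    induction k with
    | zero => intro _; exact rank_ge P _
    | succ k ih =>
      intro hk
      have h1 := ih (by push_cast at hk; omega)
      have h2 : e (fc P Φ (-1 + k)) < e (fc P Φ (-1 + (k+1:ℕ))) :=
        e.lt_iff_lt.2 (fc_lt Φ (by omega) (by omega) hk)
      have h3 := P.rank_strictMono _ _ h2
      push_cast at *
      omega
  have h1 := rank_ge P F
  have h2 := rank_le P F
  have := key (P.rank F + 1).toNat (by omega)
  rw [show -1 + (((P.rank F + 1).toNat : ℕ) : ℤ) = P.rank F by omega, fc_eq hF] at this
  exact this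

theorem rank_iso (e : P.Face ≃o P.Face) (F : P.Face) : P.rank (e F) = P.rank F := by
  apply le_antisymm _ (rank_iso_ge e F)
  have := rank_iso_ge e.symm (e F)
  simpa using this

theorem fc_map (e : P.Face ≃o P.Face) (Φ : Flag P.Face) {j : ℤ} (h1 : -1 ≤ j) (h2 : j ≤ n) :
    fc P (Flag.map e Φ) j = e (fc P Φ j) := by
  apply fc_eq'
  · show e (fc P Φ j) ∈ e '' (Φ : Set P.Face)
    exact ⟨_, fc_mem Φ h1 h2, rfl⟩
  · rw [rank_iso, fc_rank Φ h1 h2]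

theorem map_adj (e : P.Face ≃o P.Face) {i : ℕ} (hi : i < n) (Φ : Flag P.Face) :
    Flag.map e (adj i Φ) = adj i (Flag.map e Φ) := by
  have h : Agr i (i+1) (Flag.map e Φ) (Flag.map e (adj i Φ)) := by
    intro k a b c
    rw [fc_map e _ a b, fc_map e _ a b, adj_agr i Φ k a b c]
  rcases adj_uniq hi h with h | h
  · exact absurd ((Flag.map e).injective h) (adj_ne hi Φ)
  · exact h

theorem commute_GG {f : Perm (Flag P.Face)} (hf : ∀ i < n, f * rr P i = rr P i * f) {i j : ℕ}
    (hj : j ≤ n) {g : Perm (Flag P.Face)} (hg : g ∈ GG (rr P) i j) : Commute f g := by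
  induction hg using Subgroup.closure_induction with
  | mem x hx =>
    obtain ⟨k, h1, h2, rfl⟩ := hx
    exact hf k (by omega)
  | one => exact Commute.one_right f
  | mul x y _ _ hx hy => exact hx.mul_right hy
  | inv x _ hx => exact hx.inv_right

theorem well_def {f : Perm (Flag P.Face)} (hf : ∀ i < n, f * rr P i = rr P i * f)
    {Φ Ψ : Flag P.Face} {F : P.Face} (h1 : F ∈ Φ) (h2 : F ∈ Ψ) :
    fc P (f Φ) (P.rank F) = fc P (f Ψ) (P.rank F) := by
  have hge := rank_ge P F
  have hle := rank_le P F
  by_cases hm : P.rank F = -1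
  · rw [hm, fc_bot, fc_bot]
  by_cases ht : P.rank F = n
  · rw [ht, fc_top, fc_top]
  obtain ⟨k, hk⟩ : ∃ k : ℕ, P.rank F = k := ⟨(P.rank F).toNat, by omega⟩
  rw [hk]
  have hkk : fc P Φ k = fc P Ψ k := by rw [fc_eq' h1 hk, fc_eq' h2 hk]
  obtain ⟨Θ, t1, t2⟩ := exists_mix Φ Ψ (k := k) (by omega) (by omega) hkk
  obtain ⟨g, hg, rfl⟩ : Rch 0 k Φ Θ := conn' (by omega) (by
    intro m a b c
    by_cases hm : (k:ℤ) ≤ m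
    · rw [t2 m hm b]
    · have : m = -1 := by push_cast at c; omega
      rw [this, fc_bot, fc_bot])
  obtain ⟨g', hg', rfl⟩ : Rch (k+1) n (g Φ) Ψ := conn' le_rfl (by
    intro m a b c
    by_cases hm : m ≤ (k:ℤ)
    · rw [t1 m a hm]
    · have : m = n := by push_cast at c; omega
      rw [this, fc_top, fc_top])
  have c1 : f (g Φ) = g (f Φ) := DFunLike.congr_fun (commute_GG hf (by omega) hg).eq Φ
  have c2 : f (g' (g Φ)) = g' (f (g Φ)) := DFunLike.congr_fun (commute_GG hf le_rfl hg').eq (g Φ)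
  rw [c2, c1]
  rw [← GG_agr hg' _ k (by omega) (by omega) (by push_cast; omega)]
  exact GG_agr hg _ k (by omega) (by omega) (by omega)

/-- some flag through a face -/
noncomputable def thr (F : P.Face) : Flag P.Face :=
  Classical.choose ((Set.subsingleton_singleton (a := F)).isChain (r := (· ≤ ·)).exists_subset_flag)

theorem mem_thr (F : P.Face) : F ∈ thr F :=
  (Classical.choose_spec
    ((Set.subsingleton_singleton (a := F)).isChain (r := (· ≤ ·)).exists_subset_flag)) rfl

/-- face map induced by a flag permutation -/
noncomputable def fmap (f : Perm (Flag P.Face)) (F : P.Face) : P.Face := fc P (f (thr F)) (P.rank F)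

theorem fmap_eq {f : Perm (Flag P.Face)} (hf : ∀ i < n, f * rr P i = rr P i * f)
    {Φ : Flag P.Face} {F : P.Face} (h : F ∈ Φ) : fmap f F = fc P (f Φ) (P.rank F) :=
  well_def hf (mem_thr F) h

theorem fmap_mono {f : Perm (Flag P.Face)} (hf : ∀ i < n, f * rr P i = rr P i * f)
    {F G : P.Face} (h : F ≤ G) : fmap f F ≤ fmap f G := by
  obtain ⟨Φ, hΦ⟩ := (IsChain.pair (r := (· ≤ ·)) h).exists_subset_flag
  have h1 : F ∈ Φ := hΦ (by simp)
  have h2 : G ∈ Φ := hΦ (by simp)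
  rw [fmap_eq hf h1, fmap_eq hf h2]
  apply fc_le _ (rank_ge P F) _ (rank_le P G)
  rcases h.eq_or_lt with rfl | h
  · exact le_rfl
  · exact (P.rank_strictMono _ _ h).le

theorem fmap_inv {f g : Perm (Flag P.Face)} (hf : ∀ i < n, f * rr P i = rr P i * f)
    (hg : ∀ i < n, g * rr P i = rr P i * g) (hgf : ∀ x, g (f x) = x)
    (F : P.Face) : fmap g (fmap f F) = F := by
  have hm := fmap_eq hf (mem_thr F)
  have hmem : fmap f F ∈ f (thr F) := by
    rw [hm]; exact fc_mem _ (rank_ge P F) (rank_le P F)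
  rw [fmap_eq hg hmem, hgf, hm, fc_rank _ (rank_ge P F) (rank_le P F), fc_eq (mem_thr F)]

theorem sameOrbit_of_comm {f : Perm (Flag P.Face)} (hf : ∀ i < n, f * rr P i = rr P i * f)
    (Φ : Flag P.Face) : P.SameOrbit Φ (f Φ) := by
  have hf' : ∀ i < n, f⁻¹ * rr P i = rr P i * f⁻¹ := fun i hi =>
    (Commute.inv_left (show Commute f (rr P i) from hf i hi)).eq
  have i1 := fmap_inv hf hf' (by simp)
  have i2 := fmap_inv hf' hf (by simp)
  refine ⟨⟨⟨fmap f, fmap f⁻¹, i1, i2⟩, ?_⟩, ?_⟩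
  · intro a b
    refine ⟨fun h => ?_, fun h => fmap_mono hf h⟩
    have := fmap_mono hf' h
    change fmap f⁻¹ (fmap f a) ≤ fmap f⁻¹ (fmap f b) at this
    rwa [i1, i1] at this
  · ext K
    constructor
    · rintro ⟨F, hF, rfl⟩
      show fmap f F ∈ f Φ
      rw [fmap_eq hf hF]; exact fc_mem _ (rank_ge P F) (rank_le P F)
    · intro hK
      have a := rank_ge P K
      have b := rank_le P K
      refine ⟨fc P Φ (P.rank K), fc_mem Φ a b, ?_⟩
      show fmap f (fc P Φ (P.rank K)) = K
      rw [fmap_eq hf (fc_mem Φ a b), fc_rank Φ a b, fc_eq hK]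

theorem so_symm {Φ Ψ : Flag P.Face} (h : P.SameOrbit Φ Ψ) : P.SameOrbit Ψ Φ := by
  obtain ⟨e, he⟩ := h
  refine ⟨e.symm, ?_⟩
  rw [← he]; exact e.symm_image_image _

theorem so_trans {Φ Ψ Θ : Flag P.Face} (h : P.SameOrbit Φ Ψ) (h' : P.SameOrbit Ψ Θ) :
    P.SameOrbit Φ Θ := by
  obtain ⟨e, he⟩ := h
  obtain ⟨e', he'⟩ := h'
  refine ⟨e.trans e', ?_⟩
  rw [← he', ← he, Set.image_image]; rfl

theorem sdiff_of_agr {i : ℕ} (hi : i < n) {Φ Ψ : Flag P.Face} (h : Agr i (i+1) Φ Ψ)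
    (hne : fc P Ψ i ≠ fc P Φ i) : (Φ : Set P.Face) \ (Ψ : Set P.Face) = {fc P Φ i} := by
  ext F
  constructor
  · rintro ⟨h1, h2⟩
    have h1' : F ∈ Φ := h1
    have h2' : ¬ F ∈ Ψ := h2
    rw [mem_iff] at h1' h2'
    by_cases hk : P.rank F = i
    · rw [hk] at h1'; exact h1'.symm
    · exfalso; apply h2'
      rw [← h _ (rank_ge P F) (rank_le P F) (by omega)]; exact h1'
  · rintro rfl
    refine ⟨fc_mem Φ (by omega) (by omega), ?_⟩
    intro hm
    exact hne (fc_eq' hm (fc_rank Φ (by omega) (by omega)))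

theorem adjacent {i : ℕ} (hi : i < n) (Φ : Flag P.Face) : P.AdjacentFlags Φ (adj i Φ) := by
  refine ⟨(adj_ne hi Φ).symm, ?_, ?_⟩
  · rw [sdiff_of_agr hi (adj_agr i Φ) (adj_fc_ne hi Φ), Set.ncard_singleton]
  · rw [sdiff_of_agr hi (adj_agr i Φ).symm (adj_fc_ne hi Φ).symm, Set.ncard_singleton]

theorem exists_flagSys (hc : P.IsChiral) : Nonempty (FlagSys n (Flag P.Face)) := by
  obtain ⟨⟨Φ₁, Φ₂, -, h2⟩, hadj⟩ := hc
  refine ⟨{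
    r := rr P
    base := Φ₁
    inv := ?_
    comm := ?_
    col := fun Φ => decide (P.SameOrbit Φ Φ₁)
    col_r := ?_
    aut := ?_
    chir := ?_
    inter := ?_
    trans := ?_ }⟩
  · intro i _
    ext1 Φ
    exact adj_adj i Φ
  · intro i j hi hj hij
    ext1 Φ
    exact adj_comm hi hj hij Φ
  · intro i hi Φ
    have hna := hadj _ _ (adjacent hi Φ)
    rw [rr_apply]
    by_cases h : P.SameOrbit Φ Φ₁
    · have : ¬ P.SameOrbit (adj i Φ) Φ₁ := fun h' => hna (so_trans h (so_symm h'))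
      simp [h, this]
    · have h3 : P.SameOrbit Φ Φ₂ := (h2 Φ).resolve_left h
      have : P.SameOrbit (adj i Φ) Φ₁ :=
        (h2 _).resolve_right fun h' => hna (so_trans h3 (so_symm h'))
      simp [h, this]
  · intro Φ Ψ h
    have hso : P.SameOrbit Φ Ψ := by
      have h' : P.SameOrbit Φ Φ₁ ↔ P.SameOrbit Ψ Φ₁ := by simpa using h
      by_cases h1 : P.SameOrbit Φ Φ₁
      · exact so_trans h1 (so_symm (h'.1 h1))
      · exact so_trans ((h2 Φ).resolve_left h1)
          (so_symm ((h2 Ψ).resolve_left fun hh => h1 (h'.2 hh)))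
    obtain ⟨e, he⟩ := hso
    refine ⟨Flag.map e, fun i hi => ?_, Flag.ext he⟩
    ext1 Θ
    exact map_adj e hi Θ
  · intro f hf Φ
    have := sameOrbit_of_comm hf Φ
    have h' : P.SameOrbit (f Φ) Φ₁ ↔ P.SameOrbit Φ Φ₁ :=
      ⟨fun h => so_trans this h, fun h => so_trans (so_symm this) h⟩
    simp [h']
  · intro i j i' j' hj hj' Φ g hg g' hg' he
    have a1 := GG_agr hg Φ
    have a2 := GG_agr hg' Φ
    rw [← he] at a2
    refine conn' (by omega) ?_
    intro k a b c
    by_cases hk : k < i ∨ (j:ℤ) ≤ k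
    · exact a1 k a b hk
    · exact a2 k a b (by push_cast at c; omega)
  · intro Φ Ψ
    refine conn' le_rfl ?_
    intro k a b c
    rcases c with c | c
    · have : k = -1 := by push_cast at c; omega
      rw [this, fc_bot, fc_bot]
    · have : k = n := by omega
      rw [this, fc_top, fc_top]

theorem main (hn : 8 ≤ n) (hfin : Finite P.Face) (hc : P.IsChiral) :
    48 * (n - 2) * Nat.factorial (n - 2) ≤ P.numFlags := by
  obtain ⟨S⟩ := exists_flagSys hc
  have : Finite (Flag P.Face) := Finite.of_injective (fun Φ : Flag P.Face => (Φ : Set P.Face))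
    SetLike.coe_injective
  refine (S.bound hn).trans (le_of_eq ?_)
  have : S.orb 0 n S.base = Set.univ := Set.eq_univ_of_forall fun y => S.trans S.base y
  rw [FlagSys.N, this, Set.ncard_univ]
  rfl

end Bridge
end ChiralAux

/-- For every `n ≥ 8`, every finite chiral `n`-polytope has at
least `48 * (n-2) * (n-2)!` flags. -/
theorem smallest_chiral_of_rank_ge_eight
    (n : ℕ) (hn : 8 ≤ n) (P : AbstractPolytope n) (hfin : Finite P.Face)
    (hchiral : P.IsChiral) :
    48 * (n - 2) * Nat.factorial (n - 2) ≤ P.numFlags := by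
  exact ChiralAux.Bridge.main hn hfin hchiral
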